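/- arXiv:2108.11074 — 2 statements merged into one kernel-verified Lean document; each statement's English description precedes it below -/
import Mathlib

section
/- For every n > k, the log-likelihood ratio satisfies Λ_{xy,n} = (n−k)·Î_n^{(k)}(X→Y‖Z), i.e., the Neyman–Pearson test statistic equals (n−k) times the plug-in estimator of the directed information. -/
open MeasureTheory Filter Finset
open scoped BigOperators Topology ENNReal NNReal Classical

namespace DIG

/-- Extended-real logarithm: `⊥` on nonpositive reals, so that the log-likelihood of an
impossible observation is `-∞`. -/
noncomputable def elog (x : ℝ) : EReal := if x ≤ 0 then (⊥ : EReal) else ((Real.log x : ℝ) : EReal)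

/-- A block of length `L` over the alphabet `𝒳`. -/
abbrev Blk (𝒳 : Type*) (L : ℕ) : Type _ := Fin L → 𝒳

/-- A joint history of the three processes: three `k`-blocks. -/
abbrev Hist (𝒳 : Type*) (k : ℕ) : Type _ := Blk 𝒳 k × Blk 𝒳 k × Blk 𝒳 k

/-- A joint symbol of the three processes. -/
abbrev Sym (𝒳 : Type*) : Type _ := 𝒳 × 𝒳 × 𝒳

variable {𝒳 : Type*} [Fintype 𝒳] [DecidableEq 𝒳] [Nonempty 𝒳]
variable {Ω : Type*} [MeasurableSpace Ω]

/-- The real-valued measure of a set. -/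
noncomputable def mreal (μ : MeasureTheory.Measure Ω) (s : Set Ω) : ℝ := (μ s).toReal

/-- Kullback-Leibler divergence between two pmfs on a finite set (with the usual
`0 log 0 = 0` convention, automatic since `0 * x = 0`). -/
noncomputable def KLfin {S : Type*} [Fintype S] (p q : S → ℝ) : ℝ :=
  ∑ s, p s * Real.log (p s / q s)

/-- Shannon entropy of a pmf on a finite set. -/
noncomputable def Hent {S : Type*} [Fintype S] (p : S → ℝ) : ℝ :=
  -∑ s, p s * Real.log (p s)

/-- Pushforward (marginal) of a pmf along a map of finite sets. -/
noncomputable def pushf {S T : Type*} [Fintype S] [DecidableEq T] (g : S → T) (p : S → ℝ) :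
    T → ℝ := fun t => ∑ s, if g s = t then p s else 0

/-! ### Marginals of a joint distribution of `(k+1)`-blocks of three processes -/

/-- Marginal of `(Y₁ᵏ, Z₁ᵏ⁺¹)`. -/
noncomputable def margYkZ {k : ℕ} (p : Blk 𝒳 (k+1) → Blk 𝒳 (k+1) → Blk 𝒳 (k+1) → ℝ)
    (β : Blk 𝒳 k) (c : Blk 𝒳 (k+1)) : ℝ :=
  ∑ a : Blk 𝒳 (k+1), ∑ yl : 𝒳, p a (Fin.snoc β yl) c

/-- Marginal of `(Y₁ᵏ⁺¹, Z₁ᵏ⁺¹)`. -/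
noncomputable def margYZ {k : ℕ} (p : Blk 𝒳 (k+1) → Blk 𝒳 (k+1) → Blk 𝒳 (k+1) → ℝ)
    (b c : Blk 𝒳 (k+1)) : ℝ :=
  ∑ a : Blk 𝒳 (k+1), p a b c

/-- Marginal of `(X₁ᵏ⁺¹, Y₁ᵏ, Z₁ᵏ⁺¹)`. -/
noncomputable def margXYkZ {k : ℕ} (p : Blk 𝒳 (k+1) → Blk 𝒳 (k+1) → Blk 𝒳 (k+1) → ℝ)
    (a : Blk 𝒳 (k+1)) (β : Blk 𝒳 k) (c : Blk 𝒳 (k+1)) : ℝ :=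
  ∑ yl : 𝒳, p a (Fin.snoc β yl) c

/-- Marginal of `(X₁ᵏ, Y₁ᵏ, Z₁ᵏ)` (the first `k` coordinates of each block). -/
noncomputable def margK {k : ℕ} (p : Blk 𝒳 (k+1) → Blk 𝒳 (k+1) → Blk 𝒳 (k+1) → ℝ)
    (α β γ : Blk 𝒳 k) : ℝ :=
  ∑ xl : 𝒳, ∑ yl : 𝒳, ∑ zl : 𝒳, p (Fin.snoc α xl) (Fin.snoc β yl) (Fin.snoc γ zl)

/-- Conditional mutual information `I(Y_{k+1}; X₁ᵏ⁺¹ | Y₁ᵏ, Z₁ᵏ⁺¹)` computed under the joint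
pmf `p` of the three `(k+1)`-blocks. -/
noncomputable def condMI {k : ℕ} (p : Blk 𝒳 (k+1) → Blk 𝒳 (k+1) → Blk 𝒳 (k+1) → ℝ) : ℝ :=
  ∑ a : Blk 𝒳 (k+1), ∑ b : Blk 𝒳 (k+1), ∑ c : Blk 𝒳 (k+1),
    p a b c * Real.log ((p a b c * margYkZ p (Fin.init b) c) /
      (margYZ p b c * margXYkZ p a (Fin.init b) c))

/-! ### Transition matrices and factorization (absence of the edge `X → Y`) -/

/-- `Q` is a transition probability matrix for the joint `k`-th order Markov process. -/
def IsTransMat {k : ℕ} (Q : Hist 𝒳 k → Sym 𝒳 → ℝ) : Prop :=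
  (∀ h s, 0 ≤ Q h s) ∧ (∀ h, ∑ s : Sym 𝒳, Q h s = 1)

/-- The factorization of the transition matrix expressing the absence of the edge `X → Y`:
`Q(x',y',z' | hx,hy,hz) = Q1(x',z' | hx,hy,hz) · Q2(y' | hy, (hz,z'))`. -/
def IsFactorized {k : ℕ} (Q : Hist 𝒳 k → Sym 𝒳 → ℝ) : Prop :=
  ∃ (Q1 : Hist 𝒳 k → 𝒳 × 𝒳 → ℝ) (Q2 : Blk 𝒳 k × Blk 𝒳 (k+1) → 𝒳 → ℝ),
    (∀ h p, 0 ≤ Q1 h p) ∧ (∀ h, ∑ p : 𝒳 × 𝒳, Q1 h p = 1) ∧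
    (∀ h y, 0 ≤ Q2 h y) ∧ (∀ h, ∑ y : 𝒳, Q2 h y = 1) ∧
    (∀ (hx hy hz : Blk 𝒳 k) (x' y' z' : 𝒳),
      Q (hx, hy, hz) (x', y', z') = Q1 (hx, hy, hz) (x', z') * Q2 (hy, Fin.snoc hz z') y')

/-! ### The process, stationarity, Markov property, Assumption 3 -/

/-- The event that the length-`L` blocks of the three processes starting at time `t`
equal `(a, b, c)`. -/
def blockEvent (X Y Z : ℕ → Ω → 𝒳) (t L : ℕ) (a b c : Blk 𝒳 L) : Set Ω :=
  {ω | ∀ i : Fin L, X (t + i) ω = a i ∧ Y (t + i) ω = b i ∧ Z (t + i) ω = c i}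

/-- Joint stationarity of the three processes. -/
def Stationary (μ : MeasureTheory.Measure Ω) (X Y Z : ℕ → Ω → 𝒳) : Prop :=
  ∀ (t L : ℕ) (a b c : Blk 𝒳 L),
    μ (blockEvent X Y Z t L a b c) = μ (blockEvent X Y Z 0 L a b c)

/-- The joint process is Markov of order `k` with transition matrix `Q`: conditionally on the
entire past, the next joint symbol is distributed according to `Q` applied to the last
`k`-block of the past. -/
def MarkovOfOrder (μ : MeasureTheory.Measure Ω) (X Y Z : ℕ → Ω → 𝒳) (k : ℕ)
    (Q : Hist 𝒳 k → Sym 𝒳 → ℝ) : Prop :=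
  ∀ (j : ℕ) (pa pb pc : Blk 𝒳 j) (a b c : Blk 𝒳 k) (s : Sym 𝒳),
    mreal μ (blockEvent X Y Z 0 j pa pb pc ∩ blockEvent X Y Z j k a b c ∩
        {ω | X (j + k) ω = s.1 ∧ Y (j + k) ω = s.2.1 ∧ Z (j + k) ω = s.2.2})
      = Q (a, b, c) s *
        mreal μ (blockEvent X Y Z 0 j pa pb pc ∩ blockEvent X Y Z j k a b c)

/-- Assumption 3: `Y_{k+1}` is conditionally independent of the past `(Y₋∞⁰, Z₋∞⁰)` given
`(Y₁ᵏ, Z₁ᵏ⁺¹)` (stated at every time shift `j`, which by stationarity is the one-sided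
form of the two-sided statement). -/
def CondIndepPast (μ : MeasureTheory.Measure Ω) (X Y Z : ℕ → Ω → 𝒳) (k : ℕ) : Prop :=
  ∀ (j : ℕ) (py pz : Blk 𝒳 j) (b : Blk 𝒳 k) (c : Blk 𝒳 (k+1)) (y : 𝒳),
    mreal μ ({ω | Y (j + k) ω = y} ∩
        {ω | (∀ i : Fin k, Y (j + i) ω = b i) ∧ (∀ i : Fin (k+1), Z (j + i) ω = c i)} ∩
        {ω | ∀ i : Fin j, Y i ω = py i ∧ Z i ω = pz i}) *
      mreal μ {ω | (∀ i : Fin k, Y (j + i) ω = b i) ∧ (∀ i : Fin (k+1), Z (j + i) ω = c i)}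
    = mreal μ ({ω | Y (j + k) ω = y} ∩
        {ω | (∀ i : Fin k, Y (j + i) ω = b i) ∧ (∀ i : Fin (k+1), Z (j + i) ω = c i)}) *
      mreal μ ({ω | (∀ i : Fin k, Y (j + i) ω = b i) ∧ (∀ i : Fin (k+1), Z (j + i) ω = c i)} ∩
        {ω | ∀ i : Fin j, Y i ω = py i ∧ Z i ω = pz i})

/-- Measurability of the elementary events of the process. -/
def MeasProc (X Y Z : ℕ → Ω → 𝒳) : Prop :=
  ∀ (i : ℕ) (x : 𝒳), MeasurableSet {ω | X i ω = x} ∧ MeasurableSet {ω | Y i ω = x} ∧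
    MeasurableSet {ω | Z i ω = x}

/-! ### Empirical distribution, plug-in directed information, log-likelihoods -/

/-- Empirical distribution of `(k+1)`-blocks of three sample sequences of length `n`. -/
noncomputable def empDistSeq (x y z : ℕ → 𝒳) (k n : ℕ) (a b c : Blk 𝒳 (k+1)) : ℝ :=
  ((n - k : ℕ) : ℝ)⁻¹ * ∑ t ∈ Finset.range (n - k),
    if ∀ i : Fin (k+1), x (t + i) = a i ∧ y (t + i) = b i ∧ z (t + i) = c i then 1 else 0

/-- Empirical distribution of `(k+1)`-blocks of the three processes (random). -/
noncomputable def empDist (X Y Z : ℕ → Ω → 𝒳) (k n : ℕ) (a b c : Blk 𝒳 (k+1)) (ω : Ω) : ℝ :=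
  empDistSeq (fun i => X i ω) (fun i => Y i ω) (fun i => Z i ω) k n a b c

/-- The stationary `(k+1)`-block distribution `P̄`. -/
noncomputable def statDist (μ : MeasureTheory.Measure Ω) (X Y Z : ℕ → Ω → 𝒳) (k : ℕ)
    (a b c : Blk 𝒳 (k+1)) : ℝ :=
  mreal μ (blockEvent X Y Z 0 (k+1) a b c)

/-- Plug-in estimator of the directed information:
`Î_n^{(k)}(X→Y‖Z) = I(Ŷ_{k+1}; X̂₁ᵏ⁺¹ | Ŷ₁ᵏ, Ẑ₁ᵏ⁺¹)` under the empirical distribution. -/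
noncomputable def empMI (X Y Z : ℕ → Ω → 𝒳) (k n : ℕ) (ω : Ω) : ℝ :=
  condMI (fun a b c => empDist X Y Z k n a b c ω)

/-- Log-likelihood (extended-real valued) of the samples under transition matrix `Q`. -/
noncomputable def loglikSeq {k : ℕ} (Q : Hist 𝒳 k → Sym 𝒳 → ℝ) (x y z : ℕ → 𝒳) (n : ℕ) :
    EReal :=
  ∑ i ∈ Finset.Ico k n,
    elog (Q (fun j : Fin k => x (i - k + j), fun j : Fin k => y (i - k + j),
      fun j : Fin k => z (i - k + j)) (x i, y i, z i))

/-- Log-likelihood of the process samples under transition matrix `Q`. -/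
noncomputable def loglik {k : ℕ} (Q : Hist 𝒳 k → Sym 𝒳 → ℝ) (X Y Z : ℕ → Ω → 𝒳) (n : ℕ)
    (ω : Ω) : EReal :=
  loglikSeq Q (fun i => X i ω) (fun i => Y i ω) (fun i => Z i ω) n

/-- The Neyman–Pearson log-likelihood ratio `Λ_{xy,n}`: the maximal log-likelihood over all
transition matrices minus the maximal log-likelihood over the factorized (null-hypothesis)
transition matrices. -/
noncomputable def Lambda (X Y Z : ℕ → Ω → 𝒳) (k n : ℕ) (ω : Ω) : EReal :=
  sSup {L : EReal | ∃ Q : Hist 𝒳 k → Sym 𝒳 → ℝ, IsTransMat Q ∧ L = loglik Q X Y Z n ω} -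
  sSup {L : EReal | ∃ Q : Hist 𝒳 k → Sym 𝒳 → ℝ, IsTransMat Q ∧ IsFactorized Q ∧
    L = loglik Q X Y Z n ω}

/-! ### Chi-squared distribution and convergence in distribution -/

/-- The chi-squared distribution with `f` degrees of freedom: the Gamma distribution with
shape `f/2` and rate `1/2`. -/
noncomputable def chiSq (f : ℝ) : MeasureTheory.Measure ℝ :=
  ProbabilityTheory.gammaMeasure (f / 2) (1 / 2)

/-- `W n` converges in distribution (weakly) to `ν` as `n → ∞`. -/
def TendstoInDist (μ : MeasureTheory.Measure Ω) (W : ℕ → Ω → ℝ)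
    (ν : MeasureTheory.Measure ℝ) : Prop :=
  ∀ f : BoundedContinuousFunction ℝ ℝ,
    Tendsto (fun n => ∫ ω, f (W n ω) ∂μ) atTop (𝓝 (∫ x, f x ∂ν))

/-- Conditional mutual information `I(U; V | W)` of finitely-valued random variables. -/
noncomputable def cmiRV {A B C : Type*} [Fintype A] [Fintype B] [Fintype C]
    [DecidableEq A] [DecidableEq B] [DecidableEq C]
    (μ : MeasureTheory.Measure Ω) (U : Ω → A) (V : Ω → B) (W : Ω → C) : ℝ :=
  ∑ a : A, ∑ b : B, ∑ c : C,
    mreal μ {ω | U ω = a ∧ V ω = b ∧ W ω = c} *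
      Real.log ((mreal μ {ω | U ω = a ∧ V ω = b ∧ W ω = c} * mreal μ {ω | W ω = c}) /
        (mreal μ {ω | U ω = a ∧ W ω = c} * mreal μ {ω | V ω = b ∧ W ω = c}))

end DIG

namespace DIG

/-- number of times `t < m` at which `P` holds -/
noncomputable def cn (m : ℕ) (P : ℕ → Prop) : ℝ := ∑ t ∈ Finset.range m, if P t then 1 else 0

lemma cn_nonneg (m : ℕ) (P : ℕ → Prop) : 0 ≤ cn m P := by
  unfold cn
  exact Finset.sum_nonneg (fun t _ => by split_ifs <;> norm_num)

lemma cn_pos {m : ℕ} {P : ℕ → Prop} {t : ℕ} (ht : t ∈ Finset.range m) (hP : P t) :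
    0 < cn m P := by
  unfold cn
  refine Finset.sum_pos' (fun t _ => by split_ifs <;> norm_num) ⟨t, ht, ?_⟩
  simp [hP]

lemma cn_congr {m : ℕ} {P R : ℕ → Prop} (h : ∀ t, P t ↔ R t) : cn m P = cn m R := by
  have : P = R := funext fun t => propext (h t)
  rw [this]

lemma cn_regroup {A : Type*} [Fintype A] (m : ℕ) (u : ℕ → A) (g : A → ℝ) :
    ∑ t ∈ Finset.range m, g (u t) = ∑ a, cn m (fun t => u t = a) * g a := by
  unfold cn
  simp only [Finset.sum_mul]
  rw [Finset.sum_comm]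
  refine Finset.sum_congr rfl fun t _ => ?_
  simp [ite_mul]

lemma cn_marg {B : Type*} [Fintype B] (m : ℕ) (P : ℕ → Prop) (v : ℕ → B) :
    ∑ b, cn m (fun t => P t ∧ v t = b) = cn m P := by
  unfold cn
  rw [Finset.sum_comm]
  refine Finset.sum_congr rfl fun t _ => ?_
  by_cases h : P t <;> simp [h]

lemma cn_total {B : Type*} [Fintype B] (m : ℕ) (v : ℕ → B) :
    ∑ b, cn m (fun t => v t = b) = m := by
  have := cn_regroup m v (fun _ => 1)
  simpa using this.symm

/-- maximal conditional log-likelihood -/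
noncomputable def mlv {A B : Type*} (m : ℕ) (u : ℕ → A) (v : ℕ → B) : ℝ :=
  ∑ t ∈ Finset.range m,
    Real.log (cn m (fun s => u s = u t ∧ v s = v t) / cn m (fun s => u s = u t))

lemma mle_le {A B : Type*} [Fintype A] [Fintype B] (m : ℕ) (u : ℕ → A) (v : ℕ → B)
    (W : A → B → ℝ) (h0 : ∀ a b, 0 ≤ W a b) (h1 : ∀ a, ∑ b, W a b = 1)
    (hp : ∀ t ∈ Finset.range m, 0 < W (u t) (v t)) :
    ∑ t ∈ Finset.range m, Real.log (W (u t) (v t)) ≤ mlv m u v := by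
  unfold mlv
  have key : ∑ t ∈ Finset.range m,
      (W (u t) (v t) * cn m (fun s => u s = u t) / cn m (fun s => u s = u t ∧ v s = v t)) ≤ m := by
    have e := cn_regroup m (fun t => (u t, v t)) (fun ab : A × B =>
      W ab.1 ab.2 * cn m (fun s => u s = ab.1) / cn m (fun s => u s = ab.1 ∧ v s = ab.2))
    simp only at e
    rw [e, ← cn_total m u, Fintype.sum_prod_type]
    refine Finset.sum_le_sum fun a _ => ?_
    calc _ ≤ ∑ b, W a b * cn m (fun s => u s = a) := by
          refine Finset.sum_le_sum fun b _ => ?_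
          have : cn m (fun t => (u t, v t) = (a, b)) = cn m (fun s => u s = a ∧ v s = b) :=
            cn_congr fun t => by simp
          simp only [this]
          by_cases hz : cn m (fun s => u s = a ∧ v s = b) = 0
          · rw [hz, zero_mul]
            exact mul_nonneg (h0 _ _) (cn_nonneg _ _)
          · rw [mul_div_cancel₀ _ hz]
      _ = _ := by rw [← Finset.sum_mul, h1, one_mul]
  have : ∑ t ∈ Finset.range m, (Real.log (W (u t) (v t)) -
      Real.log (cn m (fun s => u s = u t ∧ v s = v t) / cn m (fun s => u s = u t))) ≤
      ∑ t ∈ Finset.range m,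
      (W (u t) (v t) * cn m (fun s => u s = u t) / cn m (fun s => u s = u t ∧ v s = v t) - 1) := by
    refine Finset.sum_le_sum fun t ht => ?_
    have hN : 0 < cn m (fun s => u s = u t ∧ v s = v t) := cn_pos ht ⟨rfl, rfl⟩
    have hM : 0 < cn m (fun s => u s = u t) := cn_pos ht rfl
    have hW := hp t ht
    rw [← Real.log_div hW.ne' (div_pos hN hM).ne', div_div_eq_mul_div]
    exact Real.log_le_sub_one_of_pos (div_pos (mul_pos hW hM) hN)
  rw [Finset.sum_sub_distrib, Finset.sum_sub_distrib] at this
  simp at this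
  linarith

lemma mle_exists {A B : Type*} [Fintype B] [Nonempty B] (m : ℕ) (u : ℕ → A) (v : ℕ → B) :
    ∃ W : A → B → ℝ, (∀ a b, 0 ≤ W a b) ∧ (∀ a, ∑ b, W a b = 1) ∧
    (∀ t ∈ Finset.range m, 0 < W (u t) (v t)) ∧
    ∑ t ∈ Finset.range m, Real.log (W (u t) (v t)) = mlv m u v := by
  have hval : ∀ t ∈ Finset.range m, cn m (fun s => u s = u t) ≠ 0 :=
    fun t ht => (cn_pos (P := fun s => u s = u t) ht rfl).ne'
  refine ⟨fun a b => if cn m (fun s => u s = a) = 0 then (Fintype.card B : ℝ)⁻¹ else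
    cn m (fun s => u s = a ∧ v s = b) / cn m (fun s => u s = a), ?_, ?_, ?_, ?_⟩
  · intro a b
    dsimp only
    split_ifs
    · positivity
    · exact div_nonneg (cn_nonneg _ _) (cn_nonneg _ _)
  · intro a
    by_cases h : cn m (fun s => u s = a) = 0
    · simp [h]
    · simp only [h, if_false]
      rw [← Finset.sum_div, cn_marg m (fun s => u s = a) v, div_self h]
  · intro t ht
    dsimp only
    rw [if_neg (hval t ht)]
    exact div_pos (cn_pos ht ⟨rfl, rfl⟩) (cn_pos ht rfl)
  · unfold mlv
    refine Finset.sum_congr rfl fun t ht => ?_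
    dsimp only
    rw [if_neg (hval t ht)]

lemma coe_sum_ereal (s : Finset ℕ) (f : ℕ → ℝ) :
    ((∑ t ∈ s, f t : ℝ) : EReal) = ∑ t ∈ s, (f t : EReal) := by
  induction s using Finset.induction_on with
  | empty => simp
  | insert a s ha ih => rw [Finset.sum_insert ha, Finset.sum_insert ha, EReal.coe_add, ih]

lemma sum_elog_pos (m : ℕ) (f : ℕ → ℝ) (h : ∀ t ∈ Finset.range m, 0 < f t) :
    ∑ t ∈ Finset.range m, elog (f t) = ((∑ t ∈ Finset.range m, Real.log (f t) : ℝ) : EReal) := by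
  rw [coe_sum_ereal]
  refine Finset.sum_congr rfl fun t ht => ?_
  rw [elog, if_neg (not_le.2 (h t ht))]

lemma sum_elog_bot (m : ℕ) (f : ℕ → ℝ) (h : ¬ ∀ t ∈ Finset.range m, 0 < f t) :
    ∑ t ∈ Finset.range m, elog (f t) = ⊥ := by
  push Not at h
  obtain ⟨t, ht, hf⟩ := h
  rw [← Finset.add_sum_erase _ _ ht, elog, if_pos hf, EReal.bot_add]

section main

variable {𝒳 : Type*} [Fintype 𝒳] [DecidableEq 𝒳] [Nonempty 𝒳]

/-- block at time `t` -/
def bl (k : ℕ) (x : ℕ → 𝒳) (t : ℕ) : Blk 𝒳 (k+1) := fun i => x (t + i)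

/-- history at time `t` -/
def hs (k : ℕ) (x y z : ℕ → 𝒳) (t : ℕ) : Hist 𝒳 k :=
  (Fin.init (bl k x t), Fin.init (bl k y t), Fin.init (bl k z t))

lemma blk_ext {k : ℕ} (a b : Blk 𝒳 (k+1)) :
    a = b ↔ Fin.init a = Fin.init b ∧ a (Fin.last k) = b (Fin.last k) := by
  constructor
  · rintro rfl; exact ⟨rfl, rfl⟩
  · rintro ⟨h1, h2⟩
    rw [← Fin.snoc_init_self a, ← Fin.snoc_init_self b, h1, h2]

lemma snoc_eq_iff {k : ℕ} (a : Blk 𝒳 (k+1)) (β : Blk 𝒳 k) (l : 𝒳) :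
    a = (Fin.snoc β l : Blk 𝒳 (k+1)) ↔ Fin.init a = β ∧ a (Fin.last k) = l := by
  rw [blk_ext]; simp [Fin.init_snoc (α := fun _ => 𝒳)]

lemma loglikSeq_eq {k : ℕ} (Q : Hist 𝒳 k → Sym 𝒳 → ℝ) (x y z : ℕ → 𝒳) (n : ℕ) :
    loglikSeq Q x y z n = ∑ t ∈ Finset.range (n - k),
      elog (Q (hs k x y z t) (x (t + k), y (t + k), z (t + k))) := by
  unfold loglikSeq
  rw [Finset.sum_Ico_eq_sum_range]
  refine Finset.sum_congr rfl fun t _ => ?_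
  have e : k + t - k = t := by omega
  rw [e, add_comm k t]
  rfl

lemma sup_full (k n : ℕ) (x y z : ℕ → 𝒳) :
    sSup {L : EReal | ∃ Q : Hist 𝒳 k → Sym 𝒳 → ℝ, IsTransMat Q ∧ L = loglikSeq Q x y z n} =
    (mlv (n - k) (hs k x y z) (fun t => (x (t + k), y (t + k), z (t + k))) : ℝ) := by
  apply le_antisymm
  · apply sSup_le
    rintro L ⟨Q, ⟨h0, h1⟩, rfl⟩
    rw [loglikSeq_eq]
    by_cases hp : ∀ t ∈ Finset.range (n - k),
        0 < Q (hs k x y z t) (x (t + k), y (t + k), z (t + k))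
    · rw [sum_elog_pos _ _ hp, EReal.coe_le_coe_iff]
      exact mle_le _ (hs k x y z) (fun t => (x (t + k), y (t + k), z (t + k))) Q h0 h1 hp
    · rw [sum_elog_bot _ _ hp]; exact bot_le
  · apply le_sSup
    obtain ⟨W, h0, h1, hp, hW⟩ := mle_exists (n - k) (hs k x y z)
      (fun t => (x (t + k), y (t + k), z (t + k)))
    refine ⟨W, ⟨h0, h1⟩, ?_⟩
    rw [loglikSeq_eq, sum_elog_pos _ _ hp, hW]

lemma sup_fact (k n : ℕ) (x y z : ℕ → 𝒳) :
    sSup {L : EReal | ∃ Q : Hist 𝒳 k → Sym 𝒳 → ℝ, IsTransMat Q ∧ IsFactorized Q ∧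
      L = loglikSeq Q x y z n} =
    ((mlv (n - k) (hs k x y z) (fun t => (x (t + k), z (t + k))) +
      mlv (n - k) (fun t => (Fin.init (bl k y t), bl k z t) : ℕ → Blk 𝒳 k × Blk 𝒳 (k+1))
        (fun t => y (t + k)) : ℝ) : EReal) := by
  have hsn : ∀ t, (Fin.snoc (Fin.init (bl k z t)) (z (t + k)) : Blk 𝒳 (k+1)) = bl k z t := by
    intro t
    have := Fin.snoc_init_self (bl k z t)
    simpa [bl] using this
  apply le_antisymm
  · apply sSup_le
    rintro L ⟨Q, -, ⟨Q1, Q2, h10, h11, h20, h21, hQ⟩, rfl⟩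
    rw [loglikSeq_eq]
    by_cases hp : ∀ t ∈ Finset.range (n - k),
        0 < Q (hs k x y z t) (x (t + k), y (t + k), z (t + k))
    · rw [sum_elog_pos _ _ hp, EReal.coe_le_coe_iff]
      have hq : ∀ t, Q (hs k x y z t) (x (t + k), y (t + k), z (t + k)) =
          Q1 (hs k x y z t) (x (t + k), z (t + k)) *
          Q2 (Fin.init (bl k y t), bl k z t) (y (t + k)) := by
        intro t
        have := hQ (Fin.init (bl k x t)) (Fin.init (bl k y t)) (Fin.init (bl k z t))
          (x (t + k)) (y (t + k)) (z (t + k))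
        rw [hsn] at this
        exact this
      have hp1 : ∀ t ∈ Finset.range (n - k), 0 < Q1 (hs k x y z t) (x (t + k), z (t + k)) := by
        intro t ht
        have := hp t ht
        rw [hq] at this
        exact pos_of_mul_pos_left this (h20 _ _)
      have hp2 : ∀ t ∈ Finset.range (n - k),
          0 < Q2 (Fin.init (bl k y t), bl k z t) (y (t + k)) := by
        intro t ht
        have := hp t ht
        rw [hq] at this
        exact pos_of_mul_pos_right this (h10 _ _)
      have e : ∑ t ∈ Finset.range (n - k),
          Real.log (Q (hs k x y z t) (x (t + k), y (t + k), z (t + k))) =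
          ∑ t ∈ Finset.range (n - k), Real.log (Q1 (hs k x y z t) (x (t + k), z (t + k))) +
          ∑ t ∈ Finset.range (n - k),
            Real.log (Q2 (Fin.init (bl k y t), bl k z t) (y (t + k))) := by
        rw [← Finset.sum_add_distrib]
        refine Finset.sum_congr rfl fun t ht => ?_
        rw [hq, Real.log_mul (hp1 t ht).ne' (hp2 t ht).ne']
      rw [e]
      exact add_le_add
        (mle_le _ (hs k x y z) (fun t => (x (t + k), z (t + k))) Q1 h10 h11 hp1)
        (mle_le _ (fun t => (Fin.init (bl k y t), bl k z t) : ℕ → Blk 𝒳 k × Blk 𝒳 (k+1))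
          (fun t => y (t + k)) Q2 h20 h21 hp2)
    · rw [sum_elog_bot _ _ hp]; exact bot_le
  · apply le_sSup
    obtain ⟨Q1, h10, h11, hp1, hW1⟩ := mle_exists (n - k) (hs k x y z)
      (fun t => (x (t + k), z (t + k)))
    obtain ⟨Q2, h20, h21, hp2, hW2⟩ := mle_exists (n - k)
      (fun t => (Fin.init (bl k y t), bl k z t) : ℕ → Blk 𝒳 k × Blk 𝒳 (k+1))
      (fun t => y (t + k))
    refine ⟨fun h s => Q1 h (s.1, s.2.2) * Q2 (h.2.1, Fin.snoc h.2.2 s.2.2) s.2.1,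
      ⟨fun h s => mul_nonneg (h10 _ _) (h20 _ _), ?_⟩,
      ⟨Q1, Q2, h10, h11, h20, h21, fun _ _ _ _ _ _ => rfl⟩, ?_⟩
    · intro h
      rw [← h11 h, Fintype.sum_prod_type, Fintype.sum_prod_type]
      refine Finset.sum_congr rfl fun a _ => ?_
      rw [Fintype.sum_prod_type, Finset.sum_comm]
      refine Finset.sum_congr rfl fun c _ => ?_
      simp only
      rw [← Finset.mul_sum, h21, mul_one]
    · rw [loglikSeq_eq]
      have hq : ∀ t, Q1 (hs k x y z t) (x (t + k), z (t + k)) *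
          Q2 ((hs k x y z t).2.1, Fin.snoc (hs k x y z t).2.2 (z (t + k))) (y (t + k)) =
          Q1 (hs k x y z t) (x (t + k), z (t + k)) *
          Q2 (Fin.init (bl k y t), bl k z t) (y (t + k)) := by
        intro t
        have : (Fin.snoc (hs k x y z t).2.2 (z (t + k)) : Blk 𝒳 (k+1)) = bl k z t := hsn t
        rw [this]; rfl
      simp only [hq]
      rw [sum_elog_pos _ _ (fun t ht => mul_pos (hp1 t ht) (hp2 t ht)), ← hW1, ← hW2,
        ← Finset.sum_add_distrib]
      congr 1
      refine Finset.sum_congr rfl fun t ht => ?_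
      rw [Real.log_mul (hp1 t ht).ne' (hp2 t ht).ne']

lemma emp_eq (k n : ℕ) (x y z : ℕ → 𝒳) (a b c : Blk 𝒳 (k+1)) :
    empDistSeq x y z k n a b c = ((n - k : ℕ) : ℝ)⁻¹ *
      cn (n - k) (fun t => bl k x t = a ∧ bl k y t = b ∧ bl k z t = c) := by
  unfold empDistSeq cn
  congr 1
  refine Finset.sum_congr rfl fun t _ => ?_
  have h : (∀ i : Fin (k+1), x (t + i) = a i ∧ y (t + i) = b i ∧ z (t + i) = c i) ↔
      (bl k x t = a ∧ bl k y t = b ∧ bl k z t = c) := by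
    simp only [funext_iff, forall_and, bl]
  by_cases hc : bl k x t = a ∧ bl k y t = b ∧ bl k z t = c
  · rw [if_pos (h.2 hc), if_pos hc]
  · rw [if_neg (fun q => hc (h.1 q)), if_neg hc]

lemma margXYkZ_eq (k n : ℕ) (x y z : ℕ → 𝒳) (a c : Blk 𝒳 (k+1)) (β : Blk 𝒳 k) :
    margXYkZ (empDistSeq x y z k n) a β c = ((n - k : ℕ) : ℝ)⁻¹ *
      cn (n - k) (fun t => bl k x t = a ∧ Fin.init (bl k y t) = β ∧ bl k z t = c) := by
  unfold margXYkZ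
  simp only [emp_eq]
  rw [← Finset.mul_sum, ← cn_marg (n - k) _ (fun t => bl k y t (Fin.last k))]
  congr 1
  refine Finset.sum_congr rfl fun l _ => cn_congr fun t => ?_
  rw [snoc_eq_iff]; tauto

lemma margYZ_eq (k n : ℕ) (x y z : ℕ → 𝒳) (b c : Blk 𝒳 (k+1)) :
    margYZ (empDistSeq x y z k n) b c = ((n - k : ℕ) : ℝ)⁻¹ *
      cn (n - k) (fun t => bl k y t = b ∧ bl k z t = c) := by
  unfold margYZ
  simp only [emp_eq]
  rw [← Finset.mul_sum, ← cn_marg (n - k) _ (fun t => bl k x t)]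
  congr 1
  refine Finset.sum_congr rfl fun l _ => cn_congr fun t => ?_
  tauto

lemma margYkZ_eq (k n : ℕ) (x y z : ℕ → 𝒳) (c : Blk 𝒳 (k+1)) (β : Blk 𝒳 k) :
    margYkZ (empDistSeq x y z k n) β c = ((n - k : ℕ) : ℝ)⁻¹ *
      cn (n - k) (fun t => Fin.init (bl k y t) = β ∧ bl k z t = c) := by
  have : margYkZ (empDistSeq x y z k n) β c = ∑ a, margXYkZ (empDistSeq x y z k n) a β c := rfl
  rw [this]
  simp only [margXYkZ_eq]
  rw [← Finset.mul_sum, ← cn_marg (n - k) _ (fun t => bl k x t)]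
  congr 1
  refine Finset.sum_congr rfl fun l _ => cn_congr fun t => ?_
  tauto

lemma condMI_eq (k n : ℕ) (hn : k < n) (x y z : ℕ → 𝒳) :
    ((n - k : ℕ) : ℝ) * condMI (empDistSeq x y z k n) = ∑ t ∈ Finset.range (n - k),
      Real.log ((cn (n - k) (fun s => bl k x s = bl k x t ∧ bl k y s = bl k y t ∧
          bl k z s = bl k z t) *
        cn (n - k) (fun s => Fin.init (bl k y s) = Fin.init (bl k y t) ∧ bl k z s = bl k z t)) /
        (cn (n - k) (fun s => bl k y s = bl k y t ∧ bl k z s = bl k z t) *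
        cn (n - k) (fun s => bl k x s = bl k x t ∧ Fin.init (bl k y s) = Fin.init (bl k y t) ∧
          bl k z s = bl k z t))) := by
  have hm : ((n - k : ℕ) : ℝ) ≠ 0 := by
    have : n - k ≠ 0 := by omega
    exact_mod_cast this
  have e := cn_regroup (n - k) (fun t => (bl k x t, bl k y t, bl k z t))
    (fun p : Blk 𝒳 (k+1) × Blk 𝒳 (k+1) × Blk 𝒳 (k+1) =>
      Real.log ((cn (n - k) (fun s => bl k x s = p.1 ∧ bl k y s = p.2.1 ∧
          bl k z s = p.2.2) *
        cn (n - k) (fun s => Fin.init (bl k y s) = Fin.init p.2.1 ∧ bl k z s = p.2.2)) /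
        (cn (n - k) (fun s => bl k y s = p.2.1 ∧ bl k z s = p.2.2) *
        cn (n - k) (fun s => bl k x s = p.1 ∧ Fin.init (bl k y s) = Fin.init p.2.1 ∧
          bl k z s = p.2.2))))
  simp only at e
  rw [e, Fintype.sum_prod_type]
  unfold condMI
  rw [Finset.mul_sum]
  refine Finset.sum_congr rfl fun a _ => ?_
  rw [Fintype.sum_prod_type, Finset.mul_sum]
  refine Finset.sum_congr rfl fun b _ => ?_
  rw [Finset.mul_sum]
  refine Finset.sum_congr rfl fun c _ => ?_
  rw [emp_eq, margYZ_eq, margYkZ_eq, margXYkZ_eq]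
  simp only [Prod.mk.injEq]
  rw [← mul_assoc, mul_inv_cancel_left₀ hm, mul_mul_mul_comm, mul_mul_mul_comm _ _ _⁻¹,
    mul_div_mul_left _ _ (mul_ne_zero (inv_ne_zero hm) (inv_ne_zero hm))]

lemma final_id (k n : ℕ) (hn : k < n) (x y z : ℕ → 𝒳) :
    mlv (n - k) (hs k x y z) (fun t => (x (t + k), y (t + k), z (t + k))) -
    (mlv (n - k) (hs k x y z) (fun t => (x (t + k), z (t + k))) +
      mlv (n - k) (fun t => (Fin.init (bl k y t), bl k z t) : ℕ → Blk 𝒳 k × Blk 𝒳 (k+1))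
        (fun t => y (t + k))) =
    ((n - k : ℕ) : ℝ) * condMI (empDistSeq x y z k n) := by
  rw [condMI_eq k n hn]
  unfold mlv
  rw [← Finset.sum_add_distrib, ← Finset.sum_sub_distrib]
  refine Finset.sum_congr rfl fun t ht => ?_
  have hl : ∀ (w : ℕ → 𝒳) s, bl k w s (Fin.last k) = w (s + k) := fun w s => by simp [bl]
  have hb : ∀ (w : ℕ → 𝒳) s, bl k w s = bl k w t ↔
      Fin.init (bl k w s) = Fin.init (bl k w t) ∧ w (s + k) = w (t + k) := by
    intro w s
    rw [blk_ext, hl, hl]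
  have e1 : cn (n - k) (fun s => hs k x y z s = hs k x y z t ∧
      (x (s + k), y (s + k), z (s + k)) = (x (t + k), y (t + k), z (t + k))) =
      cn (n - k) (fun s => bl k x s = bl k x t ∧ bl k y s = bl k y t ∧
          bl k z s = bl k z t) := cn_congr fun s => by
    simp only [hb, hs, Prod.mk.injEq]; tauto
  have e2 : cn (n - k) (fun s => hs k x y z s = hs k x y z t ∧
      (x (s + k), z (s + k)) = (x (t + k), z (t + k))) =
      cn (n - k) (fun s => bl k x s = bl k x t ∧ Fin.init (bl k y s) = Fin.init (bl k y t) ∧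
          bl k z s = bl k z t) := cn_congr fun s => by
    simp only [hb, hs, Prod.mk.injEq]; tauto
  have e3 : cn (n - k) (fun s => (Fin.init (bl k y s), bl k z s) =
      ((Fin.init (bl k y t), bl k z t) : Blk 𝒳 k × Blk 𝒳 (k+1)) ∧ y (s + k) = y (t + k)) =
      cn (n - k) (fun s => bl k y s = bl k y t ∧ bl k z s = bl k z t) := cn_congr fun s => by
    simp only [hb, Prod.mk.injEq]; tauto
  have e4 : cn (n - k) (fun s => (Fin.init (bl k y s), bl k z s) =
      ((Fin.init (bl k y t), bl k z t) : Blk 𝒳 k × Blk 𝒳 (k+1))) =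
      cn (n - k) (fun s => Fin.init (bl k y s) = Fin.init (bl k y t) ∧ bl k z s = bl k z t) :=
    cn_congr fun s => by simp only [Prod.mk.injEq]
  rw [e1, e2, e3, e4]
  have p0 : cn (n - k) (fun s => hs k x y z s = hs k x y z t) ≠ 0 :=
    (cn_pos (P := fun s => hs k x y z s = hs k x y z t) ht rfl).ne'
  have p1 : cn (n - k) (fun s => bl k x s = bl k x t ∧ bl k y s = bl k y t ∧
          bl k z s = bl k z t) ≠ 0 := (cn_pos ht ⟨rfl, rfl, rfl⟩).ne'
  have p2 : cn (n - k) (fun s => bl k x s = bl k x t ∧ Fin.init (bl k y s) = Fin.init (bl k y t) ∧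
          bl k z s = bl k z t) ≠ 0 := (cn_pos ht ⟨rfl, rfl, rfl⟩).ne'
  have p3 : cn (n - k) (fun s => bl k y s = bl k y t ∧ bl k z s = bl k z t) ≠ 0 :=
    (cn_pos ht ⟨rfl, rfl⟩).ne'
  have p4 : cn (n - k) (fun s => Fin.init (bl k y s) = Fin.init (bl k y t) ∧
      bl k z s = bl k z t) ≠ 0 := (cn_pos ht ⟨rfl, rfl⟩).ne'
  rw [Real.log_div p1 p0, Real.log_div p2 p0, Real.log_div p3 p4,
    Real.log_div (mul_ne_zero p1 p4) (mul_ne_zero p3 p2), Real.log_mul p1 p4, Real.log_mul p3 p2]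
  ring

end main

/-- For every `n > k` and every sample path, the Neyman–Pearson
log-likelihood ratio equals `(n-k)` times the plug-in estimator of directed information:
`Λ_{xy,n} = (n−k)·Î_n^{(k)}(X→Y‖Z)`. -/
theorem lambda_eq_plugin_directed_info
    {𝒳 : Type*} [Fintype 𝒳] [DecidableEq 𝒳] [Nonempty 𝒳]
    {Ω : Type*} [MeasurableSpace Ω]
    (X Y Z : ℕ → Ω → 𝒳) (k n : ℕ) (hn : k < n) (ω : Ω) :
    Lambda X Y Z k n ω = ((((n - k : ℕ) : ℝ) * empMI X Y Z k n ω : ℝ) : EReal) := by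
  unfold Lambda loglik
  rw [sup_full, sup_fact, ← EReal.coe_sub, final_id k n hn]
  rfl

end DIG
end

section
/- Under Assumptions 1–3, if the edge X→Y is present (v_xy = 1), so that Ī_xy := I(Ȳ_{k+1}; X̄_1^{k+1} | Ȳ_1^k, Z̄_1^{k+1}) > 0 under the stationary distribution of (k+1)-blocks, then there exists a finite σ² ≥ 0 such that √(n−k)·(Î_n^{(k)}(X→Y‖Z) − Ī_xy) converges in distribution to the Gaussian N(0, σ²) as n → ∞. -/
open MeasureTheory Filter Finset
open scoped BigOperators Topology ENNReal NNReal Classical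

set_option linter.unusedSectionVars false

namespace DIG

lemma poisson_solve {H A : Type*} [Fintype H] [Nonempty H] [Fintype A]
    (Q : H → A → ℝ) (T : H → A → H) (hQpos : ∀ h s, 0 < Q h s) (hQsum : ∀ h, ∑ s, Q h s = 1)
    (p : H → ℝ) (hp1 : ∑ h, p h = 1)
    (hinv : ∀ g : H → ℝ, ∑ h, p h * ∑ s, Q h s * g (T h s) = ∑ h, p h * g h)
    (hirr : ∀ r : H → Prop, (∀ h s, r h → r (T h s)) → ∀ h, r h → ∀ h', r h')
    (f : H → ℝ) (hf : ∑ h, p h * f h = 0) :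
    ∃ g : H → ℝ, ∀ h, g h - ∑ s, Q h s * g (T h s) = f h := by
  let L : (H → ℝ) →ₗ[ℝ] (H → ℝ) :=
    { toFun := fun g h => g h - ∑ s, Q h s * g (T h s)
      map_add' := by
        intro a b; ext h
        simp only [Pi.add_apply, mul_add, Finset.sum_add_distrib]; ring
      map_smul' := by
        intro c a; ext h
        simp only [Pi.smul_apply, smul_eq_mul, RingHom.id_apply, mul_sub, Finset.mul_sum]
        congr 1
        apply Finset.sum_congr rfl; intros; ring }
  let φ : (H → ℝ) →ₗ[ℝ] ℝ :=
    { toFun := fun g => ∑ h, p h * g h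
      map_add' := by
        intro a b
        simp only [Pi.add_apply, mul_add, Finset.sum_add_distrib]
      map_smul' := by
        intro c a
        simp only [Pi.smul_apply, smul_eq_mul, RingHom.id_apply, Finset.mul_sum]
        apply Finset.sum_congr rfl; intros; ring }
  have hker : LinearMap.ker L ≤ Submodule.span ℝ {(fun _ => 1 : H → ℝ)} := by
    intro g hg
    have hg' : ∀ h, g h = ∑ s, Q h s * g (T h s) := fun h => by
      have := congrFun (LinearMap.mem_ker.1 hg) h
      simp only [L, LinearMap.coe_mk, AddHom.coe_mk, Pi.zero_apply] at this
      linarith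
    obtain ⟨h0, hh0⟩ := Finite.exists_max g
    have hall := hirr (fun h => g h = g h0) (by
      intro h s hh
      by_contra hne
      have hlt : g (T h s) < g h0 := lt_of_le_of_ne (hh0 _) hne
      have : ∑ s, Q h s * g (T h s) < ∑ s, Q h s * g h0 := by
        apply Finset.sum_lt_sum
        · intro i _; exact mul_le_mul_of_nonneg_left (hh0 _) (hQpos h i).le
        · exact ⟨s, Finset.mem_univ _, mul_lt_mul_of_pos_left hlt (hQpos h s)⟩
      rw [← hg', ← Finset.sum_mul, hQsum, hh] at this
      linarith) h0 rfl
    rw [Submodule.mem_span_singleton]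
    exact ⟨g h0, by ext h; simp [hall h]⟩
  have h1 : Module.finrank ℝ (LinearMap.ker L) ≤ 1 :=
    (Submodule.finrank_mono hker).trans ((finrank_span_le_card _).trans (by simp))
  have h2 := LinearMap.finrank_range_add_finrank_ker L
  have h3 := LinearMap.finrank_range_add_finrank_ker φ
  have hφ1 : φ (fun _ => 1) = 1 := by simp [φ, hp1]
  have hφs : LinearMap.range φ = ⊤ := by
    rw [LinearMap.range_eq_top]
    intro c
    exact ⟨c • (fun _ => 1), by rw [map_smul, hφ1]; simp⟩
  rw [hφs, finrank_top, Module.finrank_self] at h3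
  have hle : LinearMap.range L ≤ LinearMap.ker φ := by
    rintro _ ⟨g, rfl⟩
    rw [LinearMap.mem_ker]
    simp only [L, φ, LinearMap.coe_mk, AddHom.coe_mk, mul_sub, Finset.sum_sub_distrib]
    rw [hinv]; simp
  have heq := Submodule.eq_of_le_of_finrank_le hle (by omega)
  have : f ∈ LinearMap.range L := by
    rw [heq, LinearMap.mem_ker]; exact hf
  obtain ⟨g, hg⟩ := this
  exact ⟨g, fun h => congrFun hg h⟩

/-- The window of length `k` of the process at time `t`. -/
def win {Ω A : Type*} (k : ℕ) (V : ℕ → Ω → A) (t : ℕ) (ω : Ω) : Fin k → A :=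
  fun i => V (t + i) ω

/-- Shift a window by one symbol. -/
def shf {A : Type*} {k : ℕ} (h : Fin k → A) (s : A) : Fin k → A :=
  fun i => if hi : (i : ℕ) + 1 < k then h ⟨i + 1, hi⟩ else s

lemma win_succ {Ω A : Type*} (k : ℕ) (V : ℕ → Ω → A) (t : ℕ) (ω : Ω) :
    win k V (t + 1) ω = shf (win k V t ω) (V (t + k) ω) := by
  ext i
  simp only [win, shf]
  have := i.2
  split_ifs with h
  · congr 1; omega
  · congr 1; omega

lemma shf_irr {A : Type*} [Nonempty A] {k : ℕ} (r : (Fin k → A) → Prop)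
    (hr : ∀ h s, r h → r (shf h s)) (h : Fin k → A) (hh : r h) (h' : Fin k → A) : r h' := by
  let a0 : A := Classical.arbitrary A
  let u : ℕ → Unit → A := fun i _ => if hi : i < k then h ⟨i, hi⟩ else
    if hi' : i - k < k then h' ⟨i - k, hi'⟩ else a0
  have key : ∀ t, r (win k u t ()) := by
    intro t
    induction t with
    | zero =>
      convert hh using 1
      ext i; simp [win, u]
    | succ t ih => rw [win_succ]; exact hr _ _ ih
  convert key k using 1
  ext i; simp [win, u]

section chain

variable {Ω A : Type*} [MeasurableSpace Ω] [Fintype A] [Nonempty A] [MeasurableSpace A]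
  [DiscreteMeasurableSpace A]

lemma int_fin {S E : Type*} [Fintype S] [MeasurableSpace S] [DiscreteMeasurableSpace S]
    [NormedAddCommGroup E] [NormedSpace ℝ E] [CompleteSpace E] (μ : Measure Ω) [IsProbabilityMeasure μ]
    (P : Ω → S) (hP : Measurable P) (F : S → E) :
    ∫ ω, F (P ω) ∂μ = ∑ s, μ.real {ω | P ω = s} • F s := by
  have h1 : ∀ ω, F (P ω) = ∑ s, Set.indicator {ω | P ω = s} (fun _ => F s) ω := by
    intro ω
    rw [Finset.sum_eq_single (P ω)]
    · simp
    · intro b _ hb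
      simp [Set.indicator, hb.symm]
    · simp
  have hm : ∀ s, MeasurableSet {ω | P ω = s} := fun s => hP (measurableSet_singleton s)
  simp_rw [h1]
  rw [integral_finsetSum]
  · apply Finset.sum_congr rfl
    intro s _
    rw [integral_indicator_const _ (hm s)]
  · intro s _
    exact (integrable_const _).indicator (hm s)

/-- The order-`k` Markov property on cylinders. -/
def MkProp (μ : Measure Ω) (V : ℕ → Ω → A) (k : ℕ) (Q : (Fin k → A) → A → ℝ) : Prop :=
  ∀ (j : ℕ) (v : Fin (j + k) → A) (s : A),
    μ.real {ω | (fun i : Fin (j + k) => V i ω) = v ∧ V (j + k) ω = s} =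
      Q (fun i : Fin k => v (Fin.natAdd j i)) s *
        μ.real {ω | (fun i : Fin (j + k) => V i ω) = v}

lemma markov_int {E : Type*} [NormedAddCommGroup E] [NormedSpace ℝ E] [CompleteSpace E]
    (μ : Measure Ω) [IsProbabilityMeasure μ] (V : ℕ → Ω → A) (hV : ∀ i, Measurable (V i)) (k : ℕ)
    (Q : (Fin k → A) → A → ℝ) (hM : MkProp μ V k Q) (j : ℕ) (Ψ : Ω → A → E)
    (hΨ : ∀ ω ω', (∀ i < j + k, V i ω = V i ω') → Ψ ω = Ψ ω') :
    ∫ ω, Ψ ω (V (j + k) ω) ∂μ = ∫ ω, ∑ s, Q (win k V j ω) s • Ψ ω s ∂μ := by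
  let P : Ω → (Fin (j + k) → A) := fun ω i => V i ω
  have hP : Measurable P := measurable_pi_iff.2 fun i => hV i
  have hfac : Function.FactorsThrough Ψ P := by
    intro ω ω' h
    apply hΨ
    intro i hi
    exact congrFun h ⟨i, hi⟩
  obtain ⟨K, hK⟩ : ∃ K : (Fin (j + k) → A) → (A → E), Ψ = K ∘ P :=
    (Function.factorsThrough_iff Ψ).1 hfac
  subst hK
  have hw : ∀ ω, win k V j ω = fun i : Fin k => P ω (Fin.natAdd j i) := by
    intro ω; ext i; simp [win, P]
  have e1 := int_fin μ (fun ω => (P ω, V (j + k) ω)) (hP.prodMk (hV _)) (fun x => K x.1 x.2)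
  have e2 := int_fin μ P hP (fun v => ∑ s, Q (fun i : Fin k => v (Fin.natAdd j i)) s • K v s)
  simp only [Function.comp]
  simp_rw [hw]
  rw [e1, e2, Fintype.sum_prod_type]
  apply Finset.sum_congr rfl
  intro v _
  rw [Finset.smul_sum]
  apply Finset.sum_congr rfl
  intro s _
  have := hM j v s
  simp only [Prod.mk.injEq]
  change μ.real {ω | P ω = v ∧ V (j + k) ω = s} = _ at this
  rw [this, smul_smul, mul_comm]


lemma chain_poisson (μ : Measure Ω) [IsProbabilityMeasure μ] (V : ℕ → Ω → A)
    (hV : ∀ i, Measurable (V i)) (k : ℕ)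
    (Q : (Fin k → A) → A → ℝ) (hM : MkProp μ V k Q)
    (hst : ∀ h, μ.real {ω | win k V 1 ω = h} = μ.real {ω | win k V 0 ω = h})
    (hQpos : ∀ h s, 0 < Q h s) (hQsum : ∀ h, ∑ s, Q h s = 1)
    (f : (Fin k → A) → ℝ) (hf : ∫ ω, f (win k V 0 ω) ∂μ = 0) :
    ∃ g : (Fin k → A) → ℝ, ∀ h, g h - ∑ s, Q h s * g (shf h s) = f h := by
  have hw : ∀ t, Measurable (win k V t) := fun t => measurable_pi_iff.2 fun i => hV _
  refine poisson_solve Q shf hQpos hQsum (fun h => μ.real {ω | win k V 0 ω = h}) ?_ ?_ ?_ f ?_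
  · have := int_fin μ (win k V 0) (hw 0) (fun _ => (1 : ℝ))
    simp at this
    exact this.symm
  · intro g
    have e0 := int_fin μ (win k V 0) (hw 0) g
    have e1 := int_fin μ (win k V 1) (hw 1) g
    have e2 := int_fin μ (win k V 0) (hw 0) (fun h => ∑ s, Q h s * g (shf h s))
    have e3 := markov_int μ V hV k Q hM 0 (fun ω s => g (shf (win k V 0 ω) s)) (by
      intro ω ω' h
      have : win k V 0 ω = win k V 0 ω' := by
        ext i; exact h _ (by omega)
      simp [this])
    simp only [smul_eq_mul] at e0 e1 e2 e3
    rw [← e2, ← e0, ← e3]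
    simp_rw [← win_succ]
    rw [e1, e0]
    simp_rw [hst]
  · intro r hr h hh h'
    exact shf_irr r hr h hh h'
  · have e0 := int_fin μ (win k V 0) (hw 0) f
    simp only [smul_eq_mul] at e0
    rw [← e0, hf]

/-- partial sums along the chain -/
noncomputable def psum (k : ℕ) (V : ℕ → Ω → A) (D : (Fin k → A) → A → ℝ) (m : ℕ) (ω : Ω) : ℝ :=
  ∑ t ∈ Finset.range m, D (win k V t ω) (V (t + k) ω)

lemma psum_meas (k : ℕ) (V : ℕ → Ω → A) (hV : ∀ i, Measurable (V i))
    (D : (Fin k → A) → A → ℝ) (m : ℕ) : Measurable (psum k V D m) := by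
  unfold psum
  apply Finset.measurable_sum
  intro t _
  have hw : Measurable (fun ω => (win k V t ω, V (t + k) ω)) :=
    (measurable_pi_iff.2 fun i => hV _).prodMk (hV _)
  exact (Measurable.of_discrete (f := fun x : (Fin k → A) × A => D x.1 x.2)).comp hw

lemma psum_dep (k : ℕ) (V : ℕ → Ω → A) (D : (Fin k → A) → A → ℝ) (m : ℕ) (ω ω' : Ω)
    (h : ∀ i < m + k, V i ω = V i ω') : psum k V D m ω = psum k V D m ω' := by
  unfold psum
  apply Finset.sum_congr rfl
  intro t ht
  rw [Finset.mem_range] at ht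
  have : win k V t ω = win k V t ω' := by
    ext i; exact h _ (by omega)
  rw [this, h _ (by omega)]

lemma win_dep (k : ℕ) (V : ℕ → Ω → A) (m : ℕ) (ω ω' : Ω)
    (h : ∀ i < m + k, V i ω = V i ω') : win k V m ω = win k V m ω' := by
  ext i; exact h _ (by omega)

lemma exp_est (K : ℝ) (hK : 0 ≤ K) : ∃ C : ℝ, 0 ≤ C ∧ ∀ d w ε : ℝ, |d| ≤ K → |w| ≤ K → |ε| ≤ 1 →
    ‖Complex.exp (Complex.I * ε * d) * (1 - ε ^ 2 / 2 * w) -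
      (1 - ε ^ 2 / 2 * w + Complex.I * ε * d - ε ^ 2 * d ^ 2 / 2)‖ ≤ C * |ε| ^ 3 := by
  refine ⟨K ^ 3 * Real.exp K * (1 + K) + (K + K ^ 2) * K, by positivity, ?_⟩
  intro d w ε hd hw hε
  set u : ℂ := Complex.I * ε * d with hu
  have hun : ‖u‖ = |ε| * |d| := by simp [hu]
  have hu1 : ‖u‖ ≤ |ε| * K := by rw [hun]; gcongr
  have hu2 : ‖u‖ ≤ K := hu1.trans (by nlinarith [abs_nonneg ε])
  have hρ := Complex.norm_exp_sub_sum_le_norm_mul_exp u 3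
  have hsum : ∑ m ∈ Finset.range 3, u ^ m / (m.factorial : ℂ) = 1 + u + u ^ 2 / 2 := by
    simp [Finset.sum_range_succ]
  rw [hsum] at hρ
  set ρ := Complex.exp u - (1 + u + u ^ 2 / 2) with hρd
  have hu2' : u ^ 2 = - (ε ^ 2 * d ^ 2) := by
    rw [hu, mul_pow, mul_pow, Complex.I_sq]; ring
  have heq : Complex.exp u * (1 - ε ^ 2 / 2 * w) - (1 - ε ^ 2 / 2 * w + u - ε ^ 2 * d ^ 2 / 2)
      = ρ * (1 - ε ^ 2 / 2 * w) + (u + u ^ 2 / 2) * (-(ε ^ 2 / 2 * w)) := by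
    have : (ε : ℂ) ^ 2 * d ^ 2 / 2 = - u ^ 2 / 2 := by rw [hu2']; ring
    rw [this, hρd]; ring
  rw [heq]
  have hw1 : ‖((ε : ℂ) ^ 2 / 2 * w)‖ ≤ |ε| ^ 2 * K := by
    simp only [norm_mul, norm_div, norm_pow, Complex.norm_real, Real.norm_eq_abs,
      Complex.norm_ofNat]
    have : |ε| ^ 2 / 2 ≤ |ε| ^ 2 := by linarith [sq_nonneg |ε|]
    gcongr
  have hw2 : |ε| ^ 2 * K ≤ K := by
    have : |ε| ^ 2 ≤ 1 := pow_le_one₀ (abs_nonneg _) hε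
    nlinarith
  have hA : ‖(1 : ℂ) - ε ^ 2 / 2 * w‖ ≤ 1 + K := by
    refine (norm_sub_le _ _).trans ?_
    simp only [norm_one]
    linarith
  have hB : ‖u + u ^ 2 / 2‖ ≤ |ε| * (K + K ^ 2) := by
    refine (norm_add_le _ _).trans ?_
    rw [norm_div, norm_pow, Complex.norm_ofNat]
    have : ‖u‖ ^ 2 ≤ |ε| * K * K := by
      rw [sq]; gcongr
    nlinarith [norm_nonneg u, sq_nonneg ‖u‖]
  have hρ' : ‖ρ‖ ≤ (|ε| * K) ^ 3 * Real.exp K := by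
    refine hρ.trans ?_
    gcongr
  calc _ ≤ ‖ρ‖ * ‖(1 : ℂ) - ε ^ 2 / 2 * w‖ + ‖u + u ^ 2 / 2‖ * ‖((ε : ℂ) ^ 2 / 2 * w)‖ := by
        refine (norm_add_le _ _).trans ?_
        rw [norm_mul, norm_mul, norm_neg]
    _ ≤ (|ε| * K) ^ 3 * Real.exp K * (1 + K) + |ε| * (K + K ^ 2) * (|ε| ^ 2 * K) := by gcongr
    _ = _ := by ring

lemma step_est (k : ℕ) (Q : (Fin k → A) → A → ℝ) (hQpos : ∀ h s, 0 < Q h s)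
    (hQsum : ∀ h, ∑ s, Q h s = 1) (D : (Fin k → A) → A → ℝ) (hD : ∀ h, ∑ s, Q h s * D h s = 0)
    (w : (Fin k → A) → ℝ) (v : ℝ)
    (hw : ∀ h, w h - ∑ s, Q h s * w (shf h s) = ∑ s, Q h s * D h s ^ 2 - v) :
    ∃ C : ℝ, 0 ≤ C ∧ ∀ ε : ℝ, |ε| ≤ 1 → ∀ h,
      ‖(∑ s, (Q h s : ℂ) * (Complex.exp (Complex.I * ε * D h s) * (1 - (ε : ℂ) ^ 2 / 2 * w (shf h s))) : ℂ) -
        (1 - (ε : ℂ) ^ 2 / 2 * v) * (1 - (ε : ℂ) ^ 2 / 2 * w h)‖ ≤ C * |ε| ^ 3 := by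
  obtain ⟨K1, hK1⟩ : ∃ K1, ∀ x : (Fin k → A) × A, |D x.1 x.2| ≤ K1 := by
    obtain ⟨x0, hx0⟩ := Finite.exists_max (fun x : (Fin k → A) × A => |D x.1 x.2|)
    exact ⟨_, hx0⟩
  obtain ⟨K2, hK2⟩ : ∃ K2, ∀ x : (Fin k → A), |w x| ≤ K2 := by
    obtain ⟨x0, hx0⟩ := Finite.exists_max (fun x : (Fin k → A) => |w x|)
    exact ⟨_, hx0⟩
  have hK2n : 0 ≤ K2 := (abs_nonneg _).trans (hK2 (Classical.arbitrary _))
  obtain ⟨C, hC0, hC⟩ := exp_est (max K1 K2) (hK2n.trans (le_max_right _ _))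
  refine ⟨C + |v| * K2, by positivity, ?_⟩
  intro ε hε h
  have key : ∑ s, (Q h s : ℂ) * (1 - ε ^ 2 / 2 * w (shf h s) + Complex.I * ε * D h s -
      ε ^ 2 * D h s ^ 2 / 2) = (1 : ℂ) - (ε : ℂ) ^ 2 / 2 * ((v : ℂ) + (w h : ℂ)) := by
    have e1 : ∑ s, (Q h s : ℂ) = 1 := by exact_mod_cast hQsum h
    have e2 : ∑ s, (Q h s : ℂ) * D h s = 0 := by exact_mod_cast hD h
    have e3 : (w h : ℂ) - ∑ s, (Q h s : ℂ) * w (shf h s) = ∑ s, (Q h s : ℂ) * D h s ^ 2 - v := by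
      exact_mod_cast hw h
    have : ∑ s, (Q h s : ℂ) * (1 - ε ^ 2 / 2 * w (shf h s) + Complex.I * ε * D h s -
      ε ^ 2 * D h s ^ 2 / 2) = ∑ s, (Q h s : ℂ) - ε ^ 2 / 2 * ∑ s, (Q h s : ℂ) * w (shf h s)
        + Complex.I * ε * ∑ s, (Q h s : ℂ) * D h s - ε ^ 2 / 2 * ∑ s, (Q h s : ℂ) * D h s ^ 2 := by
      simp only [Finset.mul_sum, ← Finset.sum_sub_distrib, ← Finset.sum_add_distrib]
      apply Finset.sum_congr rfl
      intro s _; ring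
    rw [this, e1, e2]
    linear_combination (ε : ℂ) ^ 2 / 2 * e3
  have heq : ∑ s, (Q h s : ℂ) * (Complex.exp (Complex.I * ε * D h s) *
        (1 - (ε : ℂ) ^ 2 / 2 * w (shf h s))) -
        (1 - (ε : ℂ) ^ 2 / 2 * v) * (1 - (ε : ℂ) ^ 2 / 2 * w h) =
      ∑ s, (Q h s : ℂ) * (Complex.exp (Complex.I * ε * D h s) * (1 - (ε : ℂ) ^ 2 / 2 * w (shf h s)) -
        (1 - ε ^ 2 / 2 * w (shf h s) + Complex.I * ε * D h s - ε ^ 2 * D h s ^ 2 / 2))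
      + (-((ε : ℂ) ^ 4 / 4 * ((v : ℂ) * (w h : ℂ)))) := by
    simp only [mul_sub (Q h _ : ℂ) (Complex.exp _ * _), Finset.sum_sub_distrib]
    rw [key]; ring
  rw [heq]
  refine (norm_add_le _ _).trans ?_
  rw [add_mul]
  apply add_le_add
  · calc _ ≤ ∑ s, Q h s * (C * |ε| ^ 3) := by
          refine norm_sum_le_of_le _ fun s _ => ?_
          rw [norm_mul, Complex.norm_real, Real.norm_eq_abs, abs_of_pos (hQpos h s)]
          exact mul_le_mul_of_nonneg_left (hC _ _ _ ((hK1 (h, s)).trans (le_max_left _ _))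
            ((hK2 _).trans (le_max_right _ _)) hε) (hQpos h s).le
      _ = _ := by rw [← Finset.sum_mul, hQsum, one_mul]
  · simp only [norm_neg, norm_mul, norm_div, norm_pow, Complex.norm_real, Real.norm_eq_abs,
      Complex.norm_ofNat]
    have h4 : |ε| ^ 4 / 4 ≤ |ε| ^ 3 := by
      have : |ε| ^ 4 ≤ |ε| ^ 3 := pow_le_pow_of_le_one (abs_nonneg _) hε (by norm_num)
      have : 0 ≤ |ε| ^ 4 := by positivity
      linarith
    calc _ ≤ |ε| ^ 3 * (|v| * K2) := by
          gcongr
          exact hK2 h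
      _ = _ := by ring

lemma fin_bdd {S : Type*} [Fintype S] [Nonempty S] (f : S → ℝ) : ∃ K, 0 ≤ K ∧ ∀ x, |f x| ≤ K := by
  obtain ⟨x0, hx0⟩ := Finite.exists_max (fun x => |f x|)
  exact ⟨_, abs_nonneg _, hx0⟩

lemma win_meas (k : ℕ) (V : ℕ → Ω → A) (hV : ∀ i, Measurable (V i)) (t : ℕ) :
    Measurable (win k V t) := measurable_pi_iff.2 fun i => hV _

lemma charfun_rec (μ : Measure Ω) [IsProbabilityMeasure μ] (V : ℕ → Ω → A)
    (hV : ∀ i, Measurable (V i)) (k : ℕ)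
    (Q : (Fin k → A) → A → ℝ) (hM : MkProp μ V k Q)
    (hQpos : ∀ h s, 0 < Q h s)
    (hQsum : ∀ h, ∑ s, Q h s = 1) (D : (Fin k → A) → A → ℝ) (hD : ∀ h, ∑ s, Q h s * D h s = 0)
    (w : (Fin k → A) → ℝ) (v : ℝ) (hv : 0 ≤ v)
    (hw : ∀ h, w h - ∑ s, Q h s * w (shf h s) = ∑ s, Q h s * D h s ^ 2 - v) :
    ∃ C : ℝ, 0 ≤ C ∧ ∀ ε : ℝ, |ε| ≤ 1 → ε ^ 2 / 2 * v ≤ 1 → ∀ m : ℕ,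
      ‖(∫ ω, Complex.exp (Complex.I * ε * psum k V D m ω) ∂μ) - (1 - (ε : ℂ) ^ 2 / 2 * v) ^ m‖ ≤
        C * (m * |ε| ^ 3 + ε ^ 2) := by
  obtain ⟨C, hC0, hC⟩ := step_est k Q hQpos hQsum D hD w v hw
  obtain ⟨K, hK0, hK⟩ := fin_bdd w
  refine ⟨C + K, by positivity, ?_⟩
  intro ε hε hεv m
  set b : ℕ → ℂ := fun j => ∫ ω, Complex.exp (Complex.I * ε * psum k V D j ω) *
    (1 - (ε : ℂ) ^ 2 / 2 * w (win k V j ω)) ∂μ with hb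
  set l : ℂ := 1 - (ε : ℂ) ^ 2 / 2 * v with hl
  have hlr : l = ((1 - ε ^ 2 / 2 * v : ℝ) : ℂ) := by rw [hl]; push_cast; ring
  have hl1 : ‖l‖ ≤ 1 := by
    rw [hlr, Complex.norm_real, Real.norm_eq_abs, abs_le]
    constructor
    · linarith
    · have : 0 ≤ ε ^ 2 / 2 * v := by positivity
      linarith
  have hexp1 : ∀ (j : ℕ) ω, ‖Complex.exp (Complex.I * ε * psum k V D j ω)‖ = 1 := by
    intro j ω
    have : Complex.I * ε * psum k V D j ω = ((ε * psum k V D j ω : ℝ) : ℂ) * Complex.I := by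
      push_cast; ring
    rw [this, Complex.norm_exp_ofReal_mul_I]
  have hmexp : ∀ j, Measurable (fun ω => Complex.exp (Complex.I * ε * psum k V D j ω)) := by
    intro j
    have := psum_meas k V hV D j
    fun_prop
  have hintexp : ∀ j (g : (Fin k → A) → ℂ), Integrable (fun ω => Complex.exp (Complex.I * ε *
      psum k V D j ω) * g (win k V j ω)) μ := by
    intro j g
    obtain ⟨G, hG0, hG⟩ := fin_bdd (fun x => ‖g x‖)
    refine Integrable.of_bound (C := G) ?_ (ae_of_all _ fun ω => ?_)
    · exact ((hmexp j).mul ((Measurable.of_discrete (f := g)).comp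
        (win_meas k V hV j))).aestronglyMeasurable
    · rw [norm_mul, hexp1, one_mul]
      simpa using hG (win k V j ω)
  have hstep : ∀ j, ‖b (j + 1) - l * b j‖ ≤ C * |ε| ^ 3 := by
    intro j
    have e1 := markov_int μ V hV k Q hM j (fun ω s => Complex.exp (Complex.I * ε * psum k V D j ω) *
      (Complex.exp (Complex.I * ε * D (win k V j ω) s) *
        (1 - (ε : ℂ) ^ 2 / 2 * w (shf (win k V j ω) s)))) (by
      intro ω ω' h
      simp only [psum_dep k V D j ω ω' h, win_dep k V j ω ω' h])
    have e2 : b (j + 1) = ∫ ω, Complex.exp (Complex.I * ε * psum k V D j ω) *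
        ∑ s, (Q (win k V j ω) s : ℂ) * (Complex.exp (Complex.I * ε * D (win k V j ω) s) *
        (1 - (ε : ℂ) ^ 2 / 2 * w (shf (win k V j ω) s))) ∂μ := by
      rw [hb]
      refine Eq.trans ?_ (e1.trans ?_)
      · apply integral_congr_ae (ae_of_all _ fun ω => ?_)
        rw [win_succ]
        have : psum k V D (j + 1) ω = psum k V D j ω + D (win k V j ω) (V (j + k) ω) := by
          simp [psum, Finset.sum_range_succ]
        rw [this]; push_cast
        rw [mul_add, Complex.exp_add]; ring
      · apply integral_congr_ae (ae_of_all _ fun ω => ?_)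
        rw [Finset.mul_sum]
        apply Finset.sum_congr rfl
        intro s _
        rw [Complex.real_smul]; ring
    rw [e2, hb]
    simp only
    rw [← integral_const_mul, ← integral_sub (hintexp j (fun h => ∑ s, (Q h s : ℂ) *
        (Complex.exp (Complex.I * ε * D h s) * (1 - (ε : ℂ) ^ 2 / 2 * w (shf h s)))))
        ((hintexp j (fun h => 1 - (ε : ℂ) ^ 2 / 2 * w h)).const_mul _)]
    refine (norm_integral_le_of_norm_le_const (C := C * |ε| ^ 3) (ae_of_all _ fun ω => ?_)).trans ?_
    · have := hC ε hε (win k V j ω)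
      rw [mul_left_comm, ← mul_sub, norm_mul, hexp1, one_mul]
      exact this
    · simp
  have hb0 : ‖b 0 - 1‖ ≤ ε ^ 2 / 2 * K := by
    have h1 : (1 : ℂ) = ∫ ω, (1 : ℂ) ∂μ := by simp
    have hi := hintexp 0 (fun h => 1 - (ε : ℂ) ^ 2 / 2 * w h)
    rw [h1, hb]
    simp only
    rw [← integral_sub hi (integrable_const _)]
    refine (norm_integral_le_of_norm_le_const (C := ε ^ 2 / 2 * K) (ae_of_all _ fun ω => ?_)).trans ?_
    · simp only [psum, Finset.range_zero, Finset.sum_empty, Complex.ofReal_zero, mul_zero,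
        Complex.exp_zero, one_mul, sub_sub_cancel_left, norm_neg, norm_mul, norm_div, norm_pow,
        Complex.norm_real, Real.norm_eq_abs, Complex.norm_ofNat, sq_abs]
      gcongr
      exact hK _
    · simp
  have hbm : ‖(∫ ω, Complex.exp (Complex.I * ε * psum k V D m ω) ∂μ) - b m‖ ≤ ε ^ 2 / 2 * K := by
    have hi := hintexp m (fun h => 1 - (ε : ℂ) ^ 2 / 2 * w h)
    have hi0 := hintexp m (fun h => 1)
    simp only [mul_one] at hi0
    rw [hb]
    simp only
    rw [← integral_sub hi0 hi]
    refine (norm_integral_le_of_norm_le_const (C := ε ^ 2 / 2 * K) (ae_of_all _ fun ω => ?_)).trans ?_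
    · rw [← mul_one_sub, norm_mul, hexp1]
      simp only [one_mul, sub_sub_cancel, norm_neg, norm_mul, norm_div, norm_pow,
        Complex.norm_real, Real.norm_eq_abs, Complex.norm_ofNat, sq_abs]
      gcongr
      exact hK _
    · simp
  have hind : ∀ j : ℕ, ‖b j - l ^ j * b 0‖ ≤ j * (C * |ε| ^ 3) := by
    intro j
    induction j with
    | zero => simp
    | succ j ih =>
      have : b (j + 1) - l ^ (j + 1) * b 0 = (b (j + 1) - l * b j) + l * (b j - l ^ j * b 0) := by
        ring
      rw [this]
      refine (norm_add_le _ _).trans ?_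
      rw [norm_mul]
      have h2 : ‖l‖ * ‖b j - l ^ j * b 0‖ ≤ 1 * (j * (C * |ε| ^ 3)) := by gcongr
      push_cast
      linarith [hstep j]
  have hfin : (∫ ω, Complex.exp (Complex.I * ε * psum k V D m ω) ∂μ) - l ^ m =
      ((∫ ω, Complex.exp (Complex.I * ε * psum k V D m ω) ∂μ) - b m) + (b m - l ^ m * b 0)
        + l ^ m * (b 0 - 1) := by ring
  rw [hfin]
  refine (norm_add₃_le).trans ?_
  have h3 : ‖l ^ m * (b 0 - 1)‖ ≤ ε ^ 2 / 2 * K := by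
    rw [norm_mul, norm_pow]
    have : ‖l‖ ^ m ≤ 1 := pow_le_one₀ (norm_nonneg _) hl1
    calc _ ≤ 1 * ‖b 0 - 1‖ := by gcongr
      _ ≤ _ := by rw [one_mul]; exact hb0
  have := hind m
  have h5 : 0 ≤ K * (m * |ε| ^ 3) := by positivity
  have h6 : 0 ≤ C * ε ^ 2 := by positivity
  nlinarith

lemma charfun_lim (μ : Measure Ω) [IsProbabilityMeasure μ] (V : ℕ → Ω → A)
    (hV : ∀ i, Measurable (V i)) (k : ℕ)
    (Q : (Fin k → A) → A → ℝ) (hM : MkProp μ V k Q)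
    (hQpos : ∀ h s, 0 < Q h s)
    (hQsum : ∀ h, ∑ s, Q h s = 1) (D : (Fin k → A) → A → ℝ) (hD : ∀ h, ∑ s, Q h s * D h s = 0)
    (w : (Fin k → A) → ℝ) (v : ℝ) (hv : 0 ≤ v)
    (hw : ∀ h, w h - ∑ s, Q h s * w (shf h s) = ∑ s, Q h s * D h s ^ 2 - v) (t : ℝ) :
    Tendsto (fun m : ℕ => ∫ ω, Complex.exp (Complex.I * ((t / √m : ℝ) : ℂ) * psum k V D m ω) ∂μ)
      atTop (𝓝 (Complex.exp (-(t ^ 2 * v / 2 : ℝ)))) := by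
  obtain ⟨C, hC0, hC⟩ := charfun_rec μ V hV k Q hM hQpos hQsum D hD w v hv hw
  have hsq : Tendsto (fun m : ℕ => √(m : ℝ)) atTop atTop :=
    Real.tendsto_sqrt_atTop.comp tendsto_natCast_atTop_atTop
  have hε : Tendsto (fun m : ℕ => t / √(m : ℝ)) atTop (𝓝 0) := hsq.const_div_atTop t
  have hpow : Tendsto (fun m : ℕ => (1 - ((t / √m : ℝ) : ℂ) ^ 2 / 2 * v) ^ m) atTop
      (𝓝 (Complex.exp (-(t ^ 2 * v / 2 : ℝ)))) := by
    have h1 := Real.tendsto_one_add_div_pow_exp (-(t ^ 2 * v / 2))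
    have h2 := (Complex.continuous_ofReal.tendsto _).comp h1
    rw [Complex.ofReal_exp] at h2
    push_cast at h2 ⊢
    refine h2.congr' ?_
    filter_upwards [eventually_gt_atTop 0] with m hm
    simp only [Function.comp]
    push_cast
    congr 1
    have : ((√(m : ℝ) : ℝ) : ℂ) ^ 2 = m := by
      rw [← Complex.ofReal_pow, Real.sq_sqrt (Nat.cast_nonneg _)]; simp
    rw [div_pow, this]
    have : (m : ℂ) ≠ 0 := by exact_mod_cast hm.ne'
    field_simp
    ring
  have hz : Tendsto (fun m : ℕ => C * (m * |t / √(m : ℝ)| ^ 3 + (t / √(m : ℝ)) ^ 2)) atTop (𝓝 0) := by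
    have h1 : Tendsto (fun m : ℕ => t ^ 2 * |t / √(m : ℝ)| + (t / √(m : ℝ)) ^ 2) atTop
        (𝓝 (t ^ 2 * |0| + 0 ^ 2)) := (hε.abs.const_mul _).add (hε.pow 2)
    have h2 := h1.const_mul C
    simp only [abs_zero, mul_zero, ne_eq, OfNat.ofNat_ne_zero, not_false_eq_true, zero_pow,
      add_zero] at h2
    refine h2.congr' ?_
    filter_upwards [eventually_gt_atTop 0] with m hm
    congr 2
    rw [pow_succ |t / √(m : ℝ)| 2, sq_abs, div_pow, Real.sq_sqrt (Nat.cast_nonneg _)]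
    have : (m : ℝ) ≠ 0 := by exact_mod_cast hm.ne'
    field_simp
  have hd : Tendsto (fun m : ℕ => (∫ ω, Complex.exp (Complex.I * ((t / √m : ℝ) : ℂ) *
      psum k V D m ω) ∂μ) - (1 - ((t / √m : ℝ) : ℂ) ^ 2 / 2 * v) ^ m) atTop (𝓝 0) := by
    refine squeeze_zero_norm' ?_ hz
    have hε1 : ∀ᶠ m : ℕ in atTop, |t / √(m : ℝ)| ≤ 1 := by
      have := hε.abs
      rw [abs_zero] at this
      exact (this.eventually (gt_mem_nhds one_pos)).mono fun _ h => h.le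
    have hε2 : ∀ᶠ m : ℕ in atTop, (t / √(m : ℝ)) ^ 2 / 2 * v ≤ 1 := by
      have := ((hε.pow 2).div_const 2).mul_const v
      simp only [ne_eq, OfNat.ofNat_ne_zero, not_false_eq_true, zero_pow, zero_div, zero_mul] at this
      exact (this.eventually (gt_mem_nhds one_pos)).mono fun _ h => h.le
    filter_upwards [hε1, hε2] with m h1 h2
    exact hC _ h1 h2 m
  have := hd.add hpow
  simpa using this

lemma mart_clt (μ : Measure Ω) [IsProbabilityMeasure μ] (V : ℕ → Ω → A)
    (hV : ∀ i, Measurable (V i)) (k : ℕ)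
    (Q : (Fin k → A) → A → ℝ) (hM : MkProp μ V k Q)
    (hQpos : ∀ h s, 0 < Q h s)
    (hQsum : ∀ h, ∑ s, Q h s = 1) (D : (Fin k → A) → A → ℝ) (hD : ∀ h, ∑ s, Q h s * D h s = 0)
    (w : (Fin k → A) → ℝ) (v : ℝ≥0)
    (hw : ∀ h, w h - ∑ s, Q h s * w (shf h s) = ∑ s, Q h s * D h s ^ 2 - v) :
    TendstoInDistribution (fun (m : ℕ) ω => (√(m : ℝ))⁻¹ * psum k V D m ω) atTop (id : ℝ → ℝ)
      (fun _ => μ) (ProbabilityTheory.gaussianReal 0 v) where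
  forall_aemeasurable n := ((psum_meas k V hV D n).const_mul _).aemeasurable
  tendsto := by
    refine ProbabilityMeasure.tendsto_iff_tendsto_charFun.2 fun t ↦ ?_
    have h := charfun_lim μ V hV k Q hM hQpos hQsum D hD w v v.2 hw t
    have e : charFun (Measure.map id (ProbabilityTheory.gaussianReal 0 v)) t =
        (Complex.exp (-(t ^ 2 * v / 2 : ℝ))) := by
      rw [Measure.map_id, ProbabilityTheory.charFun_gaussianReal]
      congr 1; push_cast; ring
    simp only [ProbabilityMeasure.coe_mk]
    rw [e]
    refine h.congr fun m => ?_
    rw [charFun_apply_real, integral_map]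
    · apply integral_congr_ae (ae_of_all _ fun ω => ?_)
      congr 1; push_cast; ring
    · exact ((psum_meas k V hV D m).const_mul _).aemeasurable
    · fun_prop

lemma psum_decomp (μ : Measure Ω) [IsProbabilityMeasure μ] (V : ℕ → Ω → A)
    (hV : ∀ i, Measurable (V i)) (k : ℕ)
    (Q : (Fin k → A) → A → ℝ) (hM : MkProp μ V k Q)
    (hst : ∀ h, μ.real {ω | win k V 1 ω = h} = μ.real {ω | win k V 0 ω = h})
    (hQpos : ∀ h s, 0 < Q h s) (hQsum : ∀ h, ∑ s, Q h s = 1)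
    (f : (Fin k → A) → A → ℝ) (hf : ∫ ω, f (win k V 0 ω) (V (0 + k) ω) ∂μ = 0) :
    ∃ (D : (Fin k → A) → A → ℝ) (g : (Fin k → A) → ℝ), (∀ h, ∑ s, Q h s * D h s = 0) ∧
      ∀ m ω, psum k V f m ω = psum k V D m ω + g (win k V 0 ω) - g (win k V m ω) := by
  have e := markov_int μ V hV k Q hM 0 (fun ω s => f (win k V 0 ω) s) (by
      intro ω ω' h
      rw [win_dep k V 0 ω ω' h])
  simp only [smul_eq_mul] at e
  rw [hf] at e
  obtain ⟨g, hg⟩ := chain_poisson μ V hV k Q hM hst hQpos hQsum (fun h => ∑ s, Q h s * f h s) e.symm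
  refine ⟨fun h s => f h s + g (shf h s) - g h, g, ?_, ?_⟩
  · intro h
    simp only [mul_sub, mul_add, Finset.sum_sub_distrib, Finset.sum_add_distrib]
    rw [← Finset.sum_mul, hQsum, ← hg h]; ring
  · intro m ω
    induction m with
    | zero => simp [psum]
    | succ m ih =>
      unfold psum at ih ⊢
      rw [Finset.sum_range_succ, Finset.sum_range_succ, ih, win_succ]; ring

lemma mart_sq (μ : Measure Ω) [IsProbabilityMeasure μ] (V : ℕ → Ω → A)
    (hV : ∀ i, Measurable (V i)) (k : ℕ)
    (Q : (Fin k → A) → A → ℝ) (hM : MkProp μ V k Q)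
    (D : (Fin k → A) → A → ℝ) (hD : ∀ h, ∑ s, Q h s * D h s = 0) :
    ∃ C : ℝ, 0 ≤ C ∧ ∀ m : ℕ, ∫ ω, psum k V D m ω ^ 2 ∂μ ≤ C * m := by
  obtain ⟨K, hK0, hK⟩ := fin_bdd (fun x : (Fin k → A) × A => D x.1 x.2)
  have hDm : ∀ m, Measurable (fun ω => D (win k V m ω) (V (m + k) ω)) := fun m =>
    (Measurable.of_discrete (f := fun x : (Fin k → A) × A => D x.1 x.2)).comp
      ((win_meas k V hV m).prodMk (hV _))
  have hbd : ∀ m ω, |psum k V D m ω| ≤ m * K := by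
    intro m ω
    unfold psum
    refine (Finset.abs_sum_le_sum_abs _ _).trans ?_
    refine (Finset.sum_le_sum (fun t _ => hK (win k V t ω, V (t + k) ω))).trans ?_
    simp
  refine ⟨K ^ 2, by positivity, ?_⟩
  intro m
  induction m with
  | zero => simp [psum]
  | succ m ih =>
    have hi1 : Integrable (fun ω => psum k V D m ω ^ 2) μ := by
      refine Integrable.of_bound (C := (m * K) ^ 2)
        ((psum_meas k V hV D m).pow_const 2).aestronglyMeasurable (ae_of_all _ fun ω => ?_)
      rw [norm_pow, Real.norm_eq_abs]
      gcongr
      exact hbd m ω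
    have hi2 : Integrable (fun ω => psum k V D m ω * D (win k V m ω) (V (m + k) ω)) μ := by
      refine Integrable.of_bound (C := (m * K) * K)
        ((psum_meas k V hV D m).mul (hDm m)).aestronglyMeasurable (ae_of_all _ fun ω => ?_)
      rw [norm_mul, Real.norm_eq_abs, Real.norm_eq_abs]
      exact mul_le_mul (hbd m ω) (hK (_, _)) (abs_nonneg _) (by positivity)
    have hb3 : ∀ ω, D (win k V m ω) (V (m + k) ω) ^ 2 ≤ K ^ 2 := fun ω => by
      rw [← sq_abs]
      exact pow_le_pow_left₀ (abs_nonneg _) (hK (_, _)) 2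
    have hi3 : Integrable (fun ω => D (win k V m ω) (V (m + k) ω) ^ 2) μ := by
      refine Integrable.of_bound (C := K ^ 2)
        ((hDm m).pow_const 2).aestronglyMeasurable (ae_of_all _ fun ω => ?_)
      rw [norm_pow, Real.norm_eq_abs, sq_abs]
      exact hb3 ω
    have e := markov_int μ V hV k Q hM m (fun ω s => psum k V D m ω * D (win k V m ω) s) (by
      intro ω ω' h
      simp only [psum_dep k V D m ω ω' h, win_dep k V m ω ω' h])
    have e0 : ∀ ω, ∑ s, Q (win k V m ω) s • (psum k V D m ω * D (win k V m ω) s) = 0 := by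
      intro ω
      have : ∀ s, Q (win k V m ω) s • (psum k V D m ω * D (win k V m ω) s) =
        psum k V D m ω * (Q (win k V m ω) s * D (win k V m ω) s) := by
          intro s; rw [smul_eq_mul]; ring
      simp_rw [this]
      rw [← Finset.mul_sum, hD, mul_zero]
    simp_rw [e0] at e
    rw [integral_zero] at e
    have e1 : ∀ ω, psum k V D (m + 1) ω ^ 2 = psum k V D m ω ^ 2 +
        2 * (psum k V D m ω * D (win k V m ω) (V (m + k) ω)) +
        D (win k V m ω) (V (m + k) ω) ^ 2 := by
      intro ω
      have : psum k V D (m + 1) ω = psum k V D m ω + D (win k V m ω) (V (m + k) ω) := by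
        simp [psum, Finset.sum_range_succ]
      rw [this]; ring
    simp_rw [e1]
    have hi12 : Integrable (fun ω => psum k V D m ω ^ 2 +
        2 * (psum k V D m ω * D (win k V m ω) (V (m + k) ω))) μ := hi1.add (hi2.const_mul 2)
    rw [integral_add hi12 hi3, integral_add hi1 (hi2.const_mul 2),
      integral_const_mul, e]
    have h3 : ∫ ω, D (win k V m ω) (V (m + k) ω) ^ 2 ∂μ ≤ K ^ 2 := by
      refine (integral_mono hi3 (integrable_const _) hb3).trans ?_
      simp
    push_cast
    linarith

lemma psum_sq (μ : Measure Ω) [IsProbabilityMeasure μ] (V : ℕ → Ω → A)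
    (hV : ∀ i, Measurable (V i)) (k : ℕ)
    (Q : (Fin k → A) → A → ℝ) (hM : MkProp μ V k Q)
    (hst : ∀ h, μ.real {ω | win k V 1 ω = h} = μ.real {ω | win k V 0 ω = h})
    (hQpos : ∀ h s, 0 < Q h s) (hQsum : ∀ h, ∑ s, Q h s = 1)
    (f : (Fin k → A) → A → ℝ) (hf : ∫ ω, f (win k V 0 ω) (V (0 + k) ω) ∂μ = 0) :
    ∃ C : ℝ, 0 ≤ C ∧ ∀ m : ℕ, 1 ≤ m → ∫ ω, psum k V f m ω ^ 2 ∂μ ≤ C * m := by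
  obtain ⟨D, g, hD, hdec⟩ := psum_decomp μ V hV k Q hM hst hQpos hQsum f hf
  obtain ⟨C, hC0, hC⟩ := mart_sq μ V hV k Q hM D hD
  obtain ⟨K, hK0, hK⟩ := fin_bdd g
  obtain ⟨K', hK'0, hK'⟩ := fin_bdd (fun x : (Fin k → A) × A => D x.1 x.2)
  refine ⟨2 * C + 8 * K ^ 2, by positivity, fun m hm => ?_⟩
  have hi1 : Integrable (fun ω => psum k V D m ω ^ 2) μ := by
    refine Integrable.of_bound (C := (m * K') ^ 2)
      ((psum_meas k V hV D m).pow_const 2).aestronglyMeasurable (ae_of_all _ fun ω => ?_)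
    rw [norm_pow, Real.norm_eq_abs]
    gcongr
    unfold psum
    refine (Finset.abs_sum_le_sum_abs _ _).trans ?_
    refine (Finset.sum_le_sum (fun t _ => hK' (win k V t ω, V (t + k) ω))).trans ?_
    simp
  have hle : ∀ ω, psum k V f m ω ^ 2 ≤ 2 * psum k V D m ω ^ 2 + 8 * K ^ 2 := by
    intro ω
    rw [hdec]
    have h1 := abs_le.1 (hK (win k V 0 ω))
    have h2 := abs_le.1 (hK (win k V m ω))
    set a := psum k V D m ω
    set d := g (win k V 0 ω) - g (win k V m ω) with hd
    have h3 : d ^ 2 ≤ (2 * K) ^ 2 := sq_le_sq' (by linarith) (by linarith)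
    have : a + g (win k V 0 ω) - g (win k V m ω) = a + d := by rw [hd]; ring
    rw [this]
    nlinarith [sq_nonneg (a - d)]
  refine (integral_mono_of_nonneg (ae_of_all _ fun ω => sq_nonneg _)
    ((hi1.const_mul 2).add (integrable_const (8 * K ^ 2))) (ae_of_all _ hle)).trans ?_
  simp only [Pi.add_apply]
  rw [integral_add (hi1.const_mul 2) (integrable_const _), integral_const_mul]
  have := hC m
  have hm' : (1 : ℝ) ≤ m := by exact_mod_cast hm
  simp
  nlinarith [sq_nonneg K]

lemma chain_clt (μ : Measure Ω) [IsProbabilityMeasure μ] (V : ℕ → Ω → A)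
    (hV : ∀ i, Measurable (V i)) (k : ℕ)
    (Q : (Fin k → A) → A → ℝ) (hM : MkProp μ V k Q)
    (hst : ∀ h, μ.real {ω | win k V 1 ω = h} = μ.real {ω | win k V 0 ω = h})
    (hQpos : ∀ h s, 0 < Q h s) (hQsum : ∀ h, ∑ s, Q h s = 1)
    (f : (Fin k → A) → A → ℝ) (hf : ∫ ω, f (win k V 0 ω) (V (0 + k) ω) ∂μ = 0) :
    ∃ v : ℝ≥0, TendstoInDistribution (fun (m : ℕ) ω => (√(m : ℝ))⁻¹ * psum k V f m ω) atTop
      (id : ℝ → ℝ) (fun _ => μ) (ProbabilityTheory.gaussianReal 0 v) := by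
  obtain ⟨D, g, hD, hdec⟩ := psum_decomp μ V hV k Q hM hst hQpos hQsum f hf
  set v0 : ℝ := ∫ ω, ∑ s, Q (win k V 0 ω) s * D (win k V 0 ω) s ^ 2 ∂μ with hv0
  have hv0n : 0 ≤ v0 := integral_nonneg fun ω => Finset.sum_nonneg fun s _ =>
    mul_nonneg (hQpos _ _).le (sq_nonneg _)
  obtain ⟨w, hw⟩ := chain_poisson μ V hV k Q hM hst hQpos hQsum
    (fun h => ∑ s, Q h s * D h s ^ 2 - v0) (by
      rw [integral_sub _ (integrable_const _), ← hv0]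
      · simp
      · obtain ⟨K, hK0, hK⟩ := fin_bdd (fun h => ∑ s, Q h s * D h s ^ 2)
        refine Integrable.of_bound (C := K) ?_ (ae_of_all _ fun ω => hK _)
        exact ((Measurable.of_discrete (f := fun h => ∑ s, Q h s * D h s ^ 2)).comp
          (win_meas k V hV 0)).aestronglyMeasurable)
  obtain ⟨v, hv⟩ : ∃ v : ℝ≥0, (v : ℝ) = v0 := ⟨⟨v0, hv0n⟩, rfl⟩
  rw [← hv] at hw
  refine ⟨v, ?_⟩
  have hclt := mart_clt μ V hV k Q hM hQpos hQsum D hD w v hw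
  refine tendstoInDistribution_of_tendstoInMeasure_sub _ _ hclt ?_
    (fun m => ((psum_meas k V hV f m).const_mul _).aemeasurable)
  obtain ⟨K, hK0, hK⟩ := fin_bdd g
  have hsq : Tendsto (fun m : ℕ => √(m : ℝ)) atTop atTop :=
    Real.tendsto_sqrt_atTop.comp tendsto_natCast_atTop_atTop
  have hz : Tendsto (fun m : ℕ => 2 * K / √(m : ℝ)) atTop (𝓝 0) := hsq.const_div_atTop _
  rw [tendstoInMeasure_iff_norm]
  intro ε hε
  refine tendsto_const_nhds.congr' (EventuallyEq.symm ?_)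
  filter_upwards [hz.eventually (gt_mem_nhds hε)] with m hm
  have : {x | ε ≤ ‖((fun (m : ℕ) ω => (√(m : ℝ))⁻¹ * psum k V f m ω) -
      (fun (m : ℕ) ω => (√(m : ℝ))⁻¹ * psum k V D m ω)) m x - (0 : Ω → ℝ) x‖} = ∅ := by
    ext ω
    simp only [Pi.sub_apply, Pi.zero_apply, sub_zero, Set.mem_setOf_eq, Set.mem_empty_iff_false,
      iff_false, not_le]
    refine lt_of_le_of_lt ?_ hm
    rw [hdec, ← mul_sub, norm_mul, Real.norm_eq_abs, Real.norm_eq_abs, abs_of_nonneg (by positivity),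
      div_eq_inv_mul]
    gcongr
    have h1 := abs_le.1 (hK (win k V 0 ω))
    have h2 := abs_le.1 (hK (win k V m ω))
    rw [abs_le]
    constructor <;> linarith
  rw [this]; simp

/-- Empirical distribution of windows. -/
noncomputable def emp (k : ℕ) (V : ℕ → Ω → A) (m : ℕ) (ω : Ω) (x : (Fin k → A) × A) : ℝ :=
  (m : ℝ)⁻¹ * ∑ t ∈ Finset.range m, if (win k V t ω, V (t + k) ω) = x then 1 else 0

/-- Distribution of the first window. -/
noncomputable def pzero (μ : Measure Ω) (k : ℕ) (V : ℕ → Ω → A) (x : (Fin k → A) × A) : ℝ :=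
  μ.real {ω | (win k V 0 ω, V (0 + k) ω) = x}

lemma emp_meas (k : ℕ) (V : ℕ → Ω → A) (hV : ∀ i, Measurable (V i)) (m : ℕ)
    (F : ((Fin k → A) × A → ℝ) → ℝ) : Measurable (fun ω => F (emp k V m ω)) := by
  have hP : Measurable (fun ω => (fun i : Fin (m + k) => V i ω)) :=
    measurable_pi_lambda _ fun i => hV i
  have hf : Function.FactorsThrough (fun ω => F (emp k V m ω))
      (fun ω => (fun i : Fin (m + k) => V i ω)) := by
    intro ω ω' h
    have h' : ∀ i < m + k, V i ω = V i ω' := fun i hi => congrFun h ⟨i, hi⟩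
    have : emp k V m ω = emp k V m ω' := by
      funext x
      unfold emp
      congr 1
      refine Finset.sum_congr rfl fun t ht => ?_
      have ht' := Finset.mem_range.1 ht
      have h1 : win k V t ω = win k V t ω' := by
        funext i
        exact h' _ (by have := i.2; omega)
      rw [h1, h' (t + k) (by omega)]
    simp only [this]
  obtain ⟨e, he⟩ := (Function.factorsThrough_iff _).1 hf
  rw [he]
  exact (Measurable.of_discrete (f := e)).comp hP

lemma pair_meas (k : ℕ) (V : ℕ → Ω → A) (hV : ∀ i, Measurable (V i)) (t : ℕ) :
    Measurable (fun ω => (win k V t ω, V (t + k) ω)) :=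
  (win_meas k V hV t).prodMk (hV _)

lemma delta_meth (μ : Measure Ω) [IsProbabilityMeasure μ] (V : ℕ → Ω → A)
    (hV : ∀ i, Measurable (V i)) (k : ℕ)
    (Q : (Fin k → A) → A → ℝ) (hM : MkProp μ V k Q)
    (hst : ∀ h, μ.real {ω | win k V 1 ω = h} = μ.real {ω | win k V 0 ω = h})
    (hQpos : ∀ h s, 0 < Q h s) (hQsum : ∀ h, ∑ s, Q h s = 1)
    (F : ((Fin k → A) × A → ℝ) → ℝ) (F' : ((Fin k → A) × A → ℝ) →L[ℝ] ℝ)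
    (hF : HasFDerivAt F F' (pzero μ k V)) :
    ∃ v : ℝ≥0, TendstoInDistribution
      (fun (m : ℕ) ω => √(m : ℝ) * (F (emp k V m ω) - F (pzero μ k V))) atTop
      (id : ℝ → ℝ) (fun _ => μ) (ProbabilityTheory.gaussianReal 0 v) := by
  set p0 := pzero μ k V with hp0
  let fx : (Fin k → A) × A → (Fin k → A) → A → ℝ :=
    fun x h s => (if (h, s) = x then 1 else 0) - p0 x
  have hintg : ∀ g : (Fin k → A) × A → ℝ, Integrable (fun ω => g (win k V 0 ω, V (0 + k) ω)) μ := by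
    intro g
    obtain ⟨K, hK0, hK⟩ := fin_bdd g
    exact Integrable.of_bound ((Measurable.of_discrete (f := g)).comp
      (pair_meas k V hV 0)).aestronglyMeasurable K (ae_of_all _ fun ω => hK _)
  have hfx : ∀ x, ∫ ω, fx x (win k V 0 ω) (V (0 + k) ω) ∂μ = 0 := by
    intro x
    simp only [fx]
    rw [integral_sub (hintg fun y => if y = x then 1 else 0) (integrable_const _),
      int_fin μ _ (pair_meas k V hV 0) (fun y => if y = x then (1 : ℝ) else 0)]
    simp [hp0, pzero]
  let f : (Fin k → A) → A → ℝ := fun h s => F' (fun x => fx x h s)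
  have hf : ∫ ω, f (win k V 0 ω) (V (0 + k) ω) ∂μ = 0 := by
    have : ∀ h s, f h s = ∑ x, fx x h s * F' (fun j => if x = j then 1 else 0) := by
      intro h s
      have := LinearMap.pi_apply_eq_sum_univ (F' : ((Fin k → A) × A → ℝ) →ₗ[ℝ] ℝ)
        (fun x => fx x h s)
      simpa [f] using this
    simp only [this]
    rw [integral_finsetSum _ fun x _ => (hintg fun y => fx x y.1 y.2).mul_const _]
    refine Finset.sum_eq_zero fun x _ => ?_
    rw [integral_mul_const, hfx, zero_mul]
  have hpsum : ∀ m ω, psum k V f m ω = F' (fun x => psum k V (fx x) m ω) := by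
    intro m ω
    have : (fun x => psum k V (fx x) m ω) =
        ∑ t ∈ Finset.range m, fun x => fx x (win k V t ω) (V (t + k) ω) := by
      funext x; simp [psum]
    rw [this, map_sum]; rfl
  have hemp : ∀ m : ℕ, 1 ≤ m → ∀ ω, emp k V m ω - p0 = (m : ℝ)⁻¹ • fun x => psum k V (fx x) m ω := by
    intro m hm ω
    funext x
    have hm' : (m : ℝ) ≠ 0 := by positivity
    simp only [emp, psum, fx, Pi.sub_apply, Pi.smul_apply, smul_eq_mul, Finset.sum_sub_distrib,
      Finset.sum_const, Finset.card_range, nsmul_eq_mul]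
    field_simp
  obtain ⟨v, hclt⟩ := chain_clt μ V hV k Q hM hst hQpos hQsum f hf
  refine ⟨v, ?_⟩
  refine tendstoInDistribution_of_tendstoInMeasure_sub _ _ hclt ?_
    (fun m => (((emp_meas k V hV m F).sub_const _).const_mul _).aemeasurable)
  choose Cx hCx0 hCx using fun x => psum_sq μ V hV k Q hM hst hQpos hQsum (fx x) (hfx x)
  set q : ℕ → Ω → ℝ := fun m ω => ∑ x, psum k V (fx x) m ω ^ 2 with hq
  set C := ∑ x, Cx x with hC
  have hC0 : 0 ≤ C := Finset.sum_nonneg fun x _ => hCx0 x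
  have hpi : ∀ x m, Integrable (fun ω => psum k V (fx x) m ω ^ 2) μ := by
    intro x m
    obtain ⟨K, hK0, hK⟩ := fin_bdd (fun y : (Fin k → A) × A => fx x y.1 y.2)
    refine Integrable.of_bound ((psum_meas k V hV _ m).pow_const 2).aestronglyMeasurable
      ((m * K) ^ 2) (ae_of_all _ fun ω => ?_)
    rw [norm_pow]
    gcongr
    unfold psum
    refine (norm_sum_le _ _).trans ?_
    refine (Finset.sum_le_sum fun t _ => (hK (win k V t ω, V (t + k) ω) : _)).trans ?_
    simp
  have hqi : ∀ m, Integrable (q m) μ := fun m => integrable_finsetSum _ fun x _ => hpi x m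
  have hqE : ∀ m : ℕ, 1 ≤ m → ∫ ω, q m ω ∂μ ≤ C * m := by
    intro m hm
    simp only [hq]
    rw [integral_finsetSum _ fun x _ => hpi x m, hC, Finset.sum_mul]
    exact Finset.sum_le_sum fun x _ => hCx x m hm
  have hq0 : ∀ m ω, 0 ≤ q m ω := fun m ω => Finset.sum_nonneg fun x _ => sq_nonneg _
  have hnorm : ∀ m : ℕ, 1 ≤ m → ∀ ω, ‖emp k V m ω - p0‖ ≤ (m : ℝ)⁻¹ * √(q m ω) := by
    intro m hm ω
    rw [hemp m hm, norm_smul, Real.norm_of_nonneg (by positivity)]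
    gcongr
    rw [pi_norm_le_iff_of_nonneg (by positivity)]
    intro x
    rw [Real.norm_eq_abs]
    apply Real.abs_le_sqrt
    exact Finset.single_le_sum (f := fun x => psum k V (fx x) m ω ^ 2)
      (fun y _ => sq_nonneg _) (Finset.mem_univ x)
  have hmk : ∀ m : ℕ, 1 ≤ m → ∀ a : ℝ, 0 < a → μ.real {ω | a ≤ q m ω} ≤ C * m / a := by
    intro m hm a ha
    rw [le_div_iff₀ ha, mul_comm]
    exact (mul_meas_ge_le_integral_of_nonneg (ae_of_all _ (hq0 m)) (hqi m) a).trans (hqE m hm)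
  rw [tendstoInMeasure_iff_measureReal_norm]
  intro ε hε
  rw [Metric.tendsto_atTop]
  intro γ hγ
  obtain ⟨c, hc0, hc⟩ : ∃ c : ℝ, 0 < c ∧ c ^ 2 = ε ^ 2 * γ / (2 * (C + 1)) :=
    ⟨√(ε ^ 2 * γ / (2 * (C + 1))), by positivity, Real.sq_sqrt (by positivity)⟩
  have hlo := hF.isLittleO.def hc0
  obtain ⟨η, hη, hlo⟩ := Metric.eventually_nhds_iff.1 hlo
  have hlim : Tendsto (fun m : ℕ => C / η ^ 2 / (m : ℝ)) atTop (𝓝 0) :=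
    tendsto_const_div_atTop_nhds_zero_nat _
  obtain ⟨N, hN⟩ := (hlim.eventually (gt_mem_nhds (half_pos hγ))).exists_forall_of_atTop
  refine ⟨max N 1, fun m hm => ?_⟩
  have hm1 : 1 ≤ m := le_of_max_le_right hm
  have hmN := hN m (le_of_max_le_left hm)
  have hmpos : (0 : ℝ) < m := by exact_mod_cast hm1
  rw [Real.dist_eq, sub_zero, abs_of_nonneg measureReal_nonneg]
  have hsub : {x | ε ≤ ‖((fun (m : ℕ) ω => √(m : ℝ) * (F (emp k V m ω) - F p0)) -
      (fun (m : ℕ) ω => (√(m : ℝ))⁻¹ * psum k V f m ω)) m x - (0 : Ω → ℝ) x‖} ⊆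
      {ω | (m : ℝ) ^ 2 * η ^ 2 ≤ q m ω} ∪ {ω | ε ^ 2 * m / c ^ 2 ≤ q m ω} := by
    intro ω hω
    by_contra hcon
    simp only [Set.mem_union, Set.mem_setOf_eq, not_or, not_le] at hcon
    simp only [Pi.sub_apply, Pi.zero_apply, sub_zero, Set.mem_setOf_eq] at hω
    obtain ⟨h1, h2⟩ := hcon
    have hsm : √(m : ℝ) * √(m : ℝ) = m := Real.mul_self_sqrt hmpos.le
    have hsmp : 0 < √(m : ℝ) := Real.sqrt_pos.2 hmpos
    have hs1 : √(q m ω) < m * η := by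
      rw [Real.sqrt_lt' (by positivity), mul_pow]; exact h1
    have hn := hnorm m hm1 ω
    have hn2 : ‖emp k V m ω - p0‖ < η := by
      refine lt_of_le_of_lt hn ?_
      rw [inv_mul_lt_iff₀ hmpos]; exact hs1
    have hr := hlo (y := emp k V m ω) (by rw [dist_eq_norm]; exact hn2)
    have hfd : F' (emp k V m ω - p0) = (m : ℝ)⁻¹ * psum k V f m ω := by
      rw [hemp m hm1, map_smul, hpsum, smul_eq_mul]
    rw [hfd] at hr
    have heq : √(m : ℝ) * (F (emp k V m ω) - F p0) - (√(m : ℝ))⁻¹ * psum k V f m ω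
        = √(m : ℝ) * (F (emp k V m ω) - F p0 - (m : ℝ)⁻¹ * psum k V f m ω) := by
      have : (√(m : ℝ))⁻¹ = √(m : ℝ) * (m : ℝ)⁻¹ := by
        rw [← hsm]; field_simp
        rw [Real.sqrt_sq hsmp.le]
      rw [this]; ring
    rw [heq, norm_mul, Real.norm_of_nonneg hsmp.le] at hω
    have hb : ε ≤ √(m : ℝ) * (c * ((m : ℝ)⁻¹ * √(q m ω))) := by
      refine hω.trans ?_
      gcongr
      exact hr.trans (by gcongr)
    have hb2 : ε ^ 2 ≤ c ^ 2 * q m ω / m := by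
      calc ε ^ 2 ≤ (√(m : ℝ) * (c * ((m : ℝ)⁻¹ * √(q m ω)))) ^ 2 := by gcongr
        _ = (√(m : ℝ)) ^ 2 * c ^ 2 * ((m : ℝ)⁻¹) ^ 2 * (√(q m ω)) ^ 2 := by ring
        _ = c ^ 2 * q m ω / m := by
          rw [Real.sq_sqrt hmpos.le, Real.sq_sqrt (hq0 _ _)]; field_simp
    rw [le_div_iff₀ hmpos] at hb2
    rw [lt_div_iff₀ (by positivity)] at h2
    linarith
  refine (measureReal_mono hsub).trans_lt ?_
  refine (measureReal_union_le _ _).trans_lt ?_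
  have e1 := hmk m hm1 ((m : ℝ) ^ 2 * η ^ 2) (by positivity)
  have e2 := hmk m hm1 (ε ^ 2 * m / c ^ 2) (by positivity)
  have e3 : C * m / ((m : ℝ) ^ 2 * η ^ 2) = C / η ^ 2 / (m : ℝ) := by field_simp
  have e4 : C * m / (ε ^ 2 * m / c ^ 2) ≤ γ / 2 := by
    rw [hc]
    have : C * m / (ε ^ 2 * m / (ε ^ 2 * γ / (2 * (C + 1)))) = γ / 2 * (C / (C + 1)) := by
      field_simp
    rw [this]
    have : C / (C + 1) ≤ 1 := by rw [div_le_one (by linarith)]; linarith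
    nlinarith
  rw [e3] at e1
  linarith

end chain

end DIG

namespace DIG

lemma pzero_pos {Ω A : Type*} [MeasurableSpace Ω] [Fintype A] [Nonempty A] [MeasurableSpace A]
    [DiscreteMeasurableSpace A] (μ : Measure Ω) [IsProbabilityMeasure μ] (V : ℕ → Ω → A)
    (hV : ∀ i, Measurable (V i)) (k : ℕ)
    (Q : (Fin k → A) → A → ℝ) (hM : MkProp μ V k Q) (hQpos : ∀ h s, 0 < Q h s)
    (hst : ∀ x, μ.real {ω | (win k V k ω, V (k + k) ω) = x} = pzero μ k V x) :
    ∀ x, 0 < pzero μ k V x := by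
  intro x
  obtain ⟨h0, hh0⟩ : ∃ h0, 0 < μ.real {ω | win k V 0 ω = h0} := by
    by_contra hcon
    push Not at hcon
    have h1 := int_fin μ _ (win_meas k V hV 0) (fun _ => (1 : ℝ))
    have h2 : ∀ s, μ.real {ω | win k V 0 ω = s} = 0 :=
      fun s => le_antisymm (hcon s) measureReal_nonneg
    simp [h2] at h1
  have key : ∀ w : ℕ → A, (∀ i : Fin k, w i = h0 i) → ∀ j,
      0 < μ.real {ω | ∀ i < j + k, V i ω = w i} := by
    intro w hw j
    induction j with
    | zero =>
      refine hh0.trans_le (measureReal_mono ?_)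
      intro ω hω i hi
      have hi' : i < k := by omega
      have := congrFun (hω : win k V 0 ω = h0) ⟨i, hi'⟩
      simp only [win, zero_add] at this
      rw [this]; exact (hw ⟨i, hi'⟩).symm
    | succ j ih =>
      have h1 := hM j (fun i => w i) (w (j + k))
      have h2 : {ω | (fun i : Fin (j+k) => V i ω) = (fun i : Fin (j+k) => w i)} =
          {ω | ∀ i < j + k, V i ω = w i} := by
        ext ω
        exact ⟨fun h i hi => congrFun h ⟨i, hi⟩, fun h => funext fun i => h i i.2⟩
      have h3 : {ω | (fun i : Fin (j+k) => V i ω) = (fun i : Fin (j+k) => w i)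
          ∧ V (j+k) ω = w (j+k)} = {ω | ∀ i < j + 1 + k, V i ω = w i} := by
        ext ω
        constructor
        · rintro ⟨h, h'⟩ i hi
          by_cases hik : i < j + k
          · exact congrFun h ⟨i, hik⟩
          · have : i = j + k := by omega
            subst this; exact h'
        · intro h
          exact ⟨funext fun i => h i (by have := i.2; omega), h _ (by omega)⟩
      rw [h2, h3] at h1
      rw [h1]
      exact mul_pos (hQpos _ _) ih
  have h := key (fun i => if h : i < k then h0 ⟨i, h⟩ else
    if h : i - k < k then x.1 ⟨i - k, h⟩ else x.2) (fun i => by simp) (k + 1)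
  rw [← hst]
  refine h.trans_le (measureReal_mono ?_)
  intro ω hω
  have hω' : ∀ i < k + 1 + k, V i ω = _ := hω
  show (win k V k ω, V (k + k) ω) = x
  refine Prod.ext ?_ ?_
  · funext i
    have := hω' (k + i) (by have := i.2; omega)
    simpa [win] using this
  · have := hω' (k + k) (by omega)
    simpa using this

/-- Regrouping of a triple of blocks. -/
def regroup {𝒳 : Type*} {k : ℕ} (a b c : Blk 𝒳 (k+1)) : (Fin k → Sym 𝒳) × Sym 𝒳 :=
  (fun i => (a i.castSucc, b i.castSucc, c i.castSucc),
    (a (Fin.last k), b (Fin.last k), c (Fin.last k)))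

lemma regroup_iff {𝒳 Ω : Type*} {k : ℕ} (X Y Z : ℕ → Ω → 𝒳) (t : ℕ) (ω : Ω)
    (a b c : Blk 𝒳 (k+1)) :
    (win k (fun i ω => ((X i ω, Y i ω, Z i ω) : Sym 𝒳)) t ω,
      ((X (t+k) ω, Y (t+k) ω, Z (t+k) ω) : Sym 𝒳)) = regroup a b c ↔
    ∀ i : Fin (k+1), X (t + i) ω = a i ∧ Y (t + i) ω = b i ∧ Z (t + i) ω = c i := by
  rw [Fin.forall_fin_succ']
  simp [regroup, win, funext_iff, Prod.ext_iff]

lemma condMI_diff {𝒳 : Type*} [Fintype 𝒳] [DecidableEq 𝒳] [Nonempty 𝒳] (k : ℕ)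
    (p0 : (Fin k → Sym 𝒳) × Sym 𝒳 → ℝ) (hp : ∀ x, 0 < p0 x) :
    DifferentiableAt ℝ (fun p : (Fin k → Sym 𝒳) × Sym 𝒳 → ℝ =>
      condMI (fun a b c : Blk 𝒳 (k+1) => p (regroup a b c))) p0 := by
  have d : ∀ x, DifferentiableAt ℝ (fun p : (Fin k → Sym 𝒳) × Sym 𝒳 → ℝ => p x) p0 :=
    fun x => differentiableAt_apply x p0
  unfold condMI
  refine DifferentiableAt.fun_sum fun a _ => DifferentiableAt.fun_sum fun b _ =>
    DifferentiableAt.fun_sum fun c _ => ?_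
  have d1 : DifferentiableAt ℝ (fun p : (Fin k → Sym 𝒳) × Sym 𝒳 → ℝ =>
      margYkZ (fun a b c : Blk 𝒳 (k+1) => p (regroup a b c)) (Fin.init b) c) p0 := by
    unfold margYkZ
    exact DifferentiableAt.fun_sum fun a _ => DifferentiableAt.fun_sum fun b _ => d _
  have d2 : DifferentiableAt ℝ (fun p : (Fin k → Sym 𝒳) × Sym 𝒳 → ℝ =>
      margYZ (fun a b c : Blk 𝒳 (k+1) => p (regroup a b c)) b c) p0 := by
    unfold margYZ
    exact DifferentiableAt.fun_sum fun a _ => d _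
  have d3 : DifferentiableAt ℝ (fun p : (Fin k → Sym 𝒳) × Sym 𝒳 → ℝ =>
      margXYkZ (fun a b c : Blk 𝒳 (k+1) => p (regroup a b c)) a (Fin.init b) c) p0 := by
    unfold margXYkZ
    exact DifferentiableAt.fun_sum fun a _ => d _
  have q1 : 0 < margYkZ (fun a b c : Blk 𝒳 (k+1) => p0 (regroup a b c)) (Fin.init b) c :=
    Finset.sum_pos (fun a _ => Finset.sum_pos (fun b _ => hp _) Finset.univ_nonempty)
      Finset.univ_nonempty
  have q2 : 0 < margYZ (fun a b c : Blk 𝒳 (k+1) => p0 (regroup a b c)) b c :=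
    Finset.sum_pos (fun a _ => hp _) Finset.univ_nonempty
  have q3 : 0 < margXYkZ (fun a b c : Blk 𝒳 (k+1) => p0 (regroup a b c)) a (Fin.init b) c :=
    Finset.sum_pos (fun a _ => hp _) Finset.univ_nonempty
  have d4 := DifferentiableAt.inv (d2.fun_mul d3) (mul_pos q2 q3).ne'
  refine (d _).fun_mul (DifferentiableAt.log ?_ ?_)
  · simp only [div_eq_mul_inv]
    exact ((d _).fun_mul d1).fun_mul d4
  · have hpos := div_pos (mul_pos (hp (regroup a b c)) q1) (mul_pos q2 q3)
    exact ne_of_gt hpos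

/-- Under Assumptions 1–3, if the edge `X → Y` is present (no factorization
of `Q`), so that `Ī_xy := I(Ȳ_{k+1}; X̄₁ᵏ⁺¹ | Ȳ₁ᵏ, Z̄₁ᵏ⁺¹) > 0`, then there is a finite
`σ² ≥ 0` with `√(n−k)·(Î_n^{(k)}(X→Y‖Z) − Ī_xy) → N(0, σ²)` in distribution. -/
theorem plugin_DI_clt_edge_present
    {𝒳 : Type*} [Fintype 𝒳] [DecidableEq 𝒳] [Nonempty 𝒳]
    {Ω : Type*} [MeasurableSpace Ω]
    (μ : MeasureTheory.Measure Ω) [MeasureTheory.IsProbabilityMeasure μ]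
    (X Y Z : ℕ → Ω → 𝒳) (k : ℕ) (Q : Hist 𝒳 k → Sym 𝒳 → ℝ)
    (hmeas : MeasProc X Y Z)
    (hQ : IsTransMat Q) (hQpos : ∀ h s, 0 < Q h s)
    (hMarkov : MarkovOfOrder μ X Y Z k Q)
    (hstat : Stationary μ X Y Z)
    (hA3 : CondIndepPast μ X Y Z k)
    (hedge : ¬ IsFactorized Q)
    (hIpos : 0 < condMI (statDist μ X Y Z k)) :
    ∃ σ2 : ℝ≥0,
      TendstoInDist μ
        (fun n ω => Real.sqrt ((n - k : ℕ) : ℝ) *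
          (empMI X Y Z k n ω - condMI (statDist μ X Y Z k)))
        (ProbabilityTheory.gaussianReal 0 σ2) := by
  letI : MeasurableSpace 𝒳 := ⊤
  haveI : DiscreteMeasurableSpace 𝒳 := ⟨fun _ => trivial⟩
  let V : ℕ → Ω → Sym 𝒳 := fun i ω => (X i ω, Y i ω, Z i ω)
  have hV : ∀ i, Measurable (V i) := fun i =>
    (measurable_to_countable' fun x => (hmeas i x).1).prodMk
      ((measurable_to_countable' fun x => (hmeas i x).2.1).prodMk
        (measurable_to_countable' fun x => (hmeas i x).2.2))
  let Q' : (Fin k → Sym 𝒳) → Sym 𝒳 → ℝ :=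
    fun h s => Q (fun i => (h i).1, fun i => (h i).2.1, fun i => (h i).2.2) s
  have hM : MkProp μ V k Q' := by
    intro j v s
    have h := hMarkov j (fun i => (v (Fin.castAdd k i)).1) (fun i => (v (Fin.castAdd k i)).2.1)
      (fun i => (v (Fin.castAdd k i)).2.2) (fun i => (v (Fin.natAdd j i)).1)
      (fun i => (v (Fin.natAdd j i)).2.1) (fun i => (v (Fin.natAdd j i)).2.2) s
    have hset : {ω | (fun i : Fin (j+k) => V i ω) = v} =
        blockEvent X Y Z 0 j (fun i => (v (Fin.castAdd k i)).1)
          (fun i => (v (Fin.castAdd k i)).2.1) (fun i => (v (Fin.castAdd k i)).2.2) ∩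
        blockEvent X Y Z j k (fun i => (v (Fin.natAdd j i)).1)
          (fun i => (v (Fin.natAdd j i)).2.1) (fun i => (v (Fin.natAdd j i)).2.2) := by
      ext ω
      constructor
      · intro h
        have h' : ∀ i : Fin (j + k), V i ω = v i := fun i => congrFun h i
        constructor
        · intro i
          have := h' (Fin.castAdd k i)
          simpa [V, Prod.ext_iff] using this
        · intro i
          have := h' (Fin.natAdd j i)
          simpa [V, Prod.ext_iff] using this
      · rintro ⟨h1, h2⟩
        show (fun i : Fin (j+k) => V i ω) = v
        funext i
        refine Fin.addCases (fun i => ?_) (fun i => ?_) i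
        · have := h1 i
          simpa [V, Prod.ext_iff] using this
        · have := h2 i
          simpa [V, Prod.ext_iff] using this
    have hset2 : {ω | (fun i : Fin (j+k) => V i ω) = v ∧ V (j + k) ω = s} =
        {ω | (fun i : Fin (j+k) => V i ω) = v} ∩
        {ω | X (j + k) ω = s.1 ∧ Y (j + k) ω = s.2.1 ∧ Z (j + k) ω = s.2.2} := by
      ext ω
      simp [V, Prod.ext_iff]
    rw [hset2, hset]
    exact h
  have hst : ∀ h, μ.real {ω | win k V 1 ω = h} = μ.real {ω | win k V 0 ω = h} := by
    intro h
    have hb : ∀ t, {ω | win k V t ω = h} =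
        blockEvent X Y Z t k (fun i => (h i).1) (fun i => (h i).2.1) (fun i => (h i).2.2) := by
      intro t
      ext ω
      simp [blockEvent, win, V, funext_iff, Prod.ext_iff]
    rw [hb, hb, measureReal_def, measureReal_def, hstat]
  have hblk : ∀ t a b c, {ω | (win k V t ω, V (t + k) ω) = regroup a b c} =
      blockEvent X Y Z t (k+1) a b c := by
    intro t a b c
    ext ω
    exact regroup_iff X Y Z t ω a b c
  have hsurj : ∀ x : (Fin k → Sym 𝒳) × Sym 𝒳, ∃ a b c, x = regroup a b c := by
    intro x
    refine ⟨Fin.snoc (fun i => (x.1 i).1) x.2.1, Fin.snoc (fun i => (x.1 i).2.1) x.2.2.1,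
      Fin.snoc (fun i => (x.1 i).2.2) x.2.2.2, ?_⟩
    simp [regroup]
  have hp0 : ∀ a b c, pzero μ k V (regroup a b c) = statDist μ X Y Z k a b c := by
    intro a b c
    unfold pzero statDist mreal
    rw [hblk]; rfl
  have hpos : ∀ x, 0 < pzero μ k V x := by
    refine pzero_pos μ V hV k Q' hM (fun h s => hQpos _ s) fun x => ?_
    obtain ⟨a, b, c, rfl⟩ := hsurj x
    unfold pzero
    rw [hblk, hblk, measureReal_def, measureReal_def, hstat]
  obtain ⟨v, hv⟩ := delta_meth μ V hV k Q' hM hst (fun h s => hQpos _ s) (fun h => hQ.2 _) _ _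
    (condMI_diff k (pzero μ k V) hpos).hasFDerivAt
  refine ⟨v, fun f => ?_⟩
  have ht := (ProbabilityMeasure.tendsto_iff_forall_integral_tendsto.1 hv.tendsto f).comp
    (tendsto_sub_atTop_nat k)
  simp only [ProbabilityMeasure.coe_mk, Measure.map_id] at ht
  refine ht.congr fun n => ?_
  simp only [Function.comp]
  rw [integral_map (hv.forall_aemeasurable _) f.continuous.aestronglyMeasurable]
  refine integral_congr_ae (ae_of_all _ fun ω => ?_)
  simp only [hp0]
  have he : ∀ a b c, emp k V (n - k) ω (regroup a b c) = empDist X Y Z k n a b c ω := by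
    intro a b c
    unfold emp empDist empDistSeq
    congr 1
    refine Finset.sum_congr rfl fun t _ => ?_
    have hiff := regroup_iff X Y Z t ω a b c
    split_ifs with h1 h2 h2
    · rfl
    · exact absurd (hiff.1 h1) h2
    · exact absurd (hiff.2 h2) h1
    · rfl
  simp only [he]
  rfl

end DIG
end
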